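/- arXiv:0911.3627 — 3 statements merged into one kernel-verified Lean document; each statement's English description precedes it below -/
import Mathlib

section
/- Let f : ℕ → ℚ(q) be a q-holonomic sequence of rational functions such that f(n) ≠ 0 for every n. Then the degree of f(n) is, for all sufficiently large n, a quadratic quasi-polynomial: there exist N ∈ ℕ, a positive integer π, and functions c₂, c₁, c₀ : ℕ → ℚ, each periodic with period π, such that deg(f(n)) = c₂(n)·n² + c₁(n)·n + c₀(n) for all n ≥ N. -/
/-!
Substituting `q = t ^ (-R)` turns degrees in `q` into orders of Laurent series in `t`, and the
recurrence into `∑ k ≤ e, t ^ (2 * A k * n) * p k (t ^ n) * h (n + k) = 0` with `(p k).coeff 0 ≠ 0`.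
For a suitable `R`, the divided differences of `A` and of the orders of the `(p k).coeff 0` are
integers, so all slopes of the Newton polygons below are integers.

Let `s` be the largest quadratic growth rate, such that `t ^ (-s * n ^ 2) * h n` is bounded below
linearly. For this `s` the minimum of `A k + s * k` is attained at least twice, and after twisting
by `t ^ (s * n ^ 2 + w * n)` one may assume that `h n` is bounded below and that its part of order
zero in `t ^ n` solves a recurrence with coefficients in `K⸨X⸩`, up to terms of slope one. Its
coefficients are annihilated by powers of one operator `P(E)` over `ℚ`, so by the
Skolem–Mahler–Lech theorem, on each residue class modulo some `M` this part either vanishes or has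
eventually constant order. In the first case one divides by `t ^ n` and repeats. Hence on each class
the order is quadratic with leading coefficient `s`, or it grows faster than `s * n ^ 2 + J * n`
for every `J`.

Among the shifts of `f`, considered as a module over `ℚ(q)[X]` with `X` acting as `q ^ n`, at most
`e + 1` are independent. Either the shifts by multiples of `M` are dependent enough to satisfy a
recurrence of lower order, and one concludes by induction, or they generate all shifts. Then fast
growth on one class would spread to all classes and contradict the maximality of `s`.
-/

namespace QHolonomic

open Polynomial Filter fwdDiff
open scoped LaurentSeries

/-! ### The shift operator -/

section Shift

variable {R : Type*} [CommRing R]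

/-- The shift operator `E`, `(E u)(n) = u (n + 1)`. A polynomial `P` acts on sequences as the
recurrence operator `P(E) = aeval (shift R) P`. -/
def shift (R : Type*) [CommRing R] : Module.End R (ℕ → R) :=
  LinearMap.funLeft R R Nat.succ

lemma shift_pow_apply (k : ℕ) (u : ℕ → R) (n : ℕ) : (shift R ^ k) u n = u (n + k) := by
  induction k generalizing u with
  | zero => rfl
  | succ k ih => rw [pow_succ, Module.End.mul_apply, ih]; rfl

lemma aeval_shift_apply {P : R[X]} {m : ℕ} (hm : P.natDegree < m) (u : ℕ → R) (n : ℕ) :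
    aeval (shift R) P u n = ∑ k ∈ Finset.range m, P.coeff k * u (n + k) := by
  simp [aeval_eq_sum_range' hm, shift_pow_apply]

lemma aeval_shift_congr (P : R[X]) {u v : ℕ → R} {n : ℕ} (h : ∀ m ≥ n, u m = v m) :
    aeval (shift R) P u n = aeval (shift R) P v n := by
  simp only [aeval_shift_apply (Nat.lt_succ_self P.natDegree)]
  exact Finset.sum_congr rfl fun k _ => by rw [h _ (Nat.le_add_right n k)]

lemma aeval_shift_map {S : Type*} [CommRing S] (φ : R →+* S) (P : R[X]) (u : ℕ → R) (n : ℕ) :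
    aeval (shift S) (P.map φ) (fun m => φ (u m)) n = φ (aeval (shift R) P u n) := by
  rw [aeval_shift_apply (Nat.lt_succ_self P.natDegree),
    aeval_shift_apply (Nat.lt_succ_of_le natDegree_map_le)]
  simp

lemma aeval_shift_X_pow_sub_one_pow (u : ℕ → R) (M r k : ℕ) :
    aeval (shift R) ((X ^ M - 1 : R[X]) ^ k) u r = (Δ_[1])^[k] (fun n => u (M * n + r)) 0 := by
  induction k generalizing u with
  | zero => simp
  | succ k ih =>
    rw [pow_succ, map_mul, Module.End.mul_apply, ih, Function.iterate_succ_apply]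
    refine congrArg (fun v => (Δ_[1])^[k] v 0) (funext fun n => ?_)
    simp only [map_sub, map_pow, aeval_X, map_one, LinearMap.sub_apply, Pi.sub_apply,
      shift_pow_apply, Module.End.one_apply, fwdDiff]
    ring_nf

lemma aeval_shift_scaleRoots (P : R[X]) (a : R) (u : ℕ → R) :
    aeval (shift R) (scaleRoots P a) (fun n => a ^ n * u n) =
      a ^ P.natDegree • fun n => a ^ n * aeval (shift R) P u n := by
  funext n
  rw [aeval_shift_apply (m := P.natDegree + 1) (by simp), Pi.smul_apply,
    aeval_shift_apply (Nat.lt_succ_self P.natDegree), smul_eq_mul, Finset.mul_sum, Finset.mul_sum]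
  refine Finset.sum_congr rfl fun k hk => ?_
  rw [coeff_scaleRoots, ← Nat.sub_add_cancel (Nat.lt_succ_iff.1 (Finset.mem_range.1 hk))]
  simp only [Nat.add_sub_cancel]
  ring

end Shift

/-! ### The Skolem–Mahler–Lech theorem over `ℚ` -/

section Strassmann

variable {K : Type*} [NormedField K] [IsUltrametricDist K]

lemma norm_coeff_le_of_eq_X_sub_C_mul {P Q : K[X]} {c : K} (hc : ‖c‖ ≤ 1)
    (h : P = (X - C c) * Q) {ε : ℝ} (hε : 0 ≤ ε) {k : ℕ} (hP : ∀ j ≥ k + 1, ‖P.coeff j‖ ≤ ε) :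
    ∀ j ≥ k, ‖Q.coeff j‖ ≤ ε := by
  intro j hj
  obtain hj' | hj' := le_or_gt j (Q.natDegree + 1)
  · induction hj' using Nat.decreasingInduction with
    | self => simpa [coeff_eq_zero_of_natDegree_lt (Nat.lt_succ_self _)] using hε
    | of_succ i _ ih =>
      have hcoeff : Q.coeff i = P.coeff (i + 1) + c * Q.coeff (i + 1) := by
        rw [h, sub_mul, coeff_sub, coeff_X_mul, coeff_C_mul]; ring
      rw [hcoeff]
      refine (IsUltrametricDist.norm_add_le_max _ _).trans (max_le (hP _ (by omega)) ?_)
      rw [norm_mul]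
      exact (mul_le_of_le_one_left (norm_nonneg _) hc).trans (ih (by omega))
  · simpa [coeff_eq_zero_of_natDegree_lt (by omega : Q.natDegree < j)] using hε

/-- An `ε`-version of Strassmann's bound on the number of zeros in the unit ball. -/
lemma norm_eval_le_of_card_roots {ε : ℝ} (hε : 0 ≤ ε) (S : Finset K) (hS : ∀ a ∈ S, ‖a‖ ≤ 1)
    {P : K[X]} (hroot : ∀ a ∈ S, P.IsRoot a) (hP : ∀ j ≥ S.card, ‖P.coeff j‖ ≤ ε)
    {x : K} (hx : ‖x‖ ≤ 1) : ‖P.eval x‖ ≤ ε := by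
  classical
  induction S using Finset.induction_on generalizing P with
  | empty =>
    rw [eval_eq_sum_range]
    refine IsUltrametricDist.norm_sum_le_of_forall_le_of_nonneg hε fun i _ => ?_
    rw [norm_mul, norm_pow]
    exact (mul_le_of_le_one_right (norm_nonneg _) (pow_le_one₀ (norm_nonneg _) hx)).trans
      (hP i (by simp))
  | insert a S ha ih =>
    obtain ⟨Q, hQ⟩ := dvd_iff_isRoot.2 (hroot a (by simp))
    rw [Finset.card_insert_of_notMem ha] at hP
    have hQroot : ∀ b ∈ S, Q.IsRoot b := fun b hb => by
      have hb' : (b - a) * Q.eval b = 0 := by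
        simpa [hQ] using hroot b (Finset.mem_insert_of_mem hb)
      exact (mul_eq_zero.1 hb').resolve_left (sub_ne_zero.2 fun h => ha (h ▸ hb))
    have ha1 := hS a (Finset.mem_insert_self a S)
    have hQx := ih (fun b hb => hS b (Finset.mem_insert_of_mem hb)) hQroot
      (norm_coeff_le_of_eq_X_sub_C_mul ha1 hQ hε hP)
    have hxa : ‖x - a‖ ≤ 1 := by
      rw [sub_eq_add_neg]
      exact (IsUltrametricDist.norm_add_le_max _ _).trans (max_le hx (by rwa [norm_neg]))
    rw [hQ, eval_mul, norm_mul, eval_sub, eval_X, eval_C]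
    exact (mul_le_of_le_one_left (norm_nonneg _) hxa).trans hQx

end Strassmann

section Newton

variable {K : Type*} [Field K] [CharZero K]

/-- The Newton interpolation polynomial of `w` at the nodes `0, …, m`. -/
noncomputable def newtonInterp (w : ℕ → K) (m : ℕ) : K[X] :=
  ∑ k ∈ Finset.range (m + 1), C ((Δ_[1])^[k] w 0 / k.factorial) * descPochhammer K k

lemma eval_newtonInterp (w : ℕ → K) {m n : ℕ} (hn : n ≤ m) :
    (newtonInterp w m).eval (n : K) = w n := by
  have hnewton := shift_eq_sum_fwdDiff_iter 1 w n 0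
  rw [zero_add, nsmul_one, Nat.cast_id] at hnewton
  rw [hnewton, newtonInterp, eval_finsetSum,
    ← Finset.sum_subset (Finset.range_subset_range.2 (Nat.succ_le_succ hn))]
  · refine Finset.sum_congr rfl fun k _ => ?_
    have hk : (k.factorial : K) ≠ 0 := by exact_mod_cast k.factorial_ne_zero
    rw [eval_mul, eval_C, descPochhammer_eval_eq_descFactorial,
      Nat.descFactorial_eq_factorial_mul_choose, nsmul_eq_mul, Nat.cast_mul]
    field_simp
  · intro k _ hk
    rw [eval_mul, descPochhammer_eval_eq_descFactorial,
      Nat.descFactorial_of_lt (by simpa using hk), Nat.cast_zero, mul_zero]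

end Newton

section Hansel

variable {p : ℕ} [hp : Fact p.Prime]

lemma norm_le_of_pow_dvd_pow_mul {N k : ℕ} {d : ℤ} (hd : (p : ℤ) ^ k ∣ p ^ N * d) :
    ‖(d : ℚ_[p])‖ ≤ (p : ℝ) ^ N * (p : ℝ)⁻¹ ^ k := by
  have hp0 : (0 : ℝ) < p := by exact_mod_cast hp.1.pos
  obtain ⟨c, hc⟩ := hd
  have hnorm : (p : ℝ)⁻¹ ^ N * ‖(d : ℚ_[p])‖ = (p : ℝ)⁻¹ ^ k * ‖(c : ℚ_[p])‖ := by
    simpa using congrArg norm (congrArg (Int.cast : ℤ → ℚ_[p]) hc)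
  calc ‖(d : ℚ_[p])‖ = (p : ℝ) ^ N * ((p : ℝ)⁻¹ ^ N * ‖(d : ℚ_[p])‖) := by
        rw [← mul_assoc, ← mul_pow, mul_inv_cancel₀ hp0.ne', one_pow, one_mul]
    _ ≤ (p : ℝ) ^ N * (p : ℝ)⁻¹ ^ k := by
        rw [hnorm]
        gcongr
        exact mul_le_of_le_one_right (by positivity) (Padic.norm_int_le_one c)

lemma inv_pow_half_le_norm_factorial (hp2 : 2 < p) (k : ℕ) :
    (p : ℝ)⁻¹ ^ (k / 2) ≤ ‖(k.factorial : ℚ_[p])‖ := by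
  have hval : padicValNat p k.factorial ≤ k / 2 := by
    have hlegendre := sub_one_mul_padicValNat_factorial (p := p) k
    have : 2 * padicValNat p k.factorial ≤ (p - 1) * padicValNat p k.factorial :=
      Nat.mul_le_mul_right _ (by omega)
    omega
  rw [Padic.norm_eq_zpow_neg_valuation (by exact_mod_cast k.factorial_ne_zero),
    Padic.valuation_natCast, zpow_neg, zpow_natCast, ← inv_pow]
  exact pow_le_pow_of_le_one (by positivity)
    (inv_le_one_of_one_le₀ (by exact_mod_cast hp.1.one_le)) hval

lemma norm_coeff_newtonInterp_le (hp2 : 2 < p) {w : ℕ → ℤ} {N : ℕ}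
    (hw : ∀ k, (p : ℤ) ^ k ∣ p ^ N * (Δ_[1])^[k] w 0) (m j : ℕ) :
    ‖(newtonInterp (fun n => (w n : ℚ_[p])) m).coeff j‖ ≤ (p : ℝ) ^ N * (p : ℝ)⁻¹ ^ (j / 2) := by
  have hp1 : (p : ℝ)⁻¹ ≤ 1 := inv_le_one_of_one_le₀ (by exact_mod_cast hp.1.one_le)
  have hpinv : 0 < (p : ℝ)⁻¹ := inv_pos.2 (by exact_mod_cast hp.1.pos)
  have hcast : ∀ k, (Δ_[1])^[k] (fun n => (w n : ℚ_[p])) 0 = (((Δ_[1])^[k] w 0 : ℤ) : ℚ_[p]) := by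
    intro k
    simp [fwdDiff_iter_eq_sum_shift]
  rw [newtonInterp, finsetSum_coeff]
  refine IsUltrametricDist.norm_sum_le_of_forall_le_of_nonneg (by positivity) fun k _ => ?_
  rw [coeff_C_mul, norm_mul, hcast, norm_div]
  obtain hkj | hjk := lt_or_ge k j
  · rw [coeff_eq_zero_of_natDegree_lt (by rwa [descPochhammer_natDegree]), norm_zero, mul_zero]
    positivity
  have hpoch : ‖(descPochhammer ℚ_[p] k).coeff j‖ ≤ 1 := by
    rw [← descPochhammer_map (Int.castRingHom ℚ_[p]) k, coeff_map]
    exact Padic.norm_int_le_one _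
  refine (mul_le_of_le_one_right (by positivity) hpoch).trans ?_
  rw [div_le_iff₀ (norm_pos_iff.2 (by exact_mod_cast k.factorial_ne_zero)), mul_assoc]
  refine (norm_le_of_pow_dvd_pow_mul (hw k)).trans ?_
  gcongr
  calc (p : ℝ)⁻¹ ^ k ≤ (p : ℝ)⁻¹ ^ (j / 2 + k / 2) :=
        pow_le_pow_of_le_one hpinv.le hp1 (by omega)
    _ = (p : ℝ)⁻¹ ^ (j / 2) * (p : ℝ)⁻¹ ^ (k / 2) := pow_add _ _ _
    _ ≤ _ := by gcongr; exact inv_pow_half_le_norm_factorial hp2 k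

/-- Hansel's lemma: the Newton series of `w` defines a `p`-adic analytic function on the unit
ball, which cannot vanish infinitely often without vanishing identically. -/
lemma eq_zero_of_pow_dvd_fwdDiff_iter (hp2 : 2 < p) {w : ℕ → ℤ} {N : ℕ}
    (hw : ∀ k, (p : ℤ) ^ k ∣ p ^ N * (Δ_[1])^[k] w 0) (hinf : {n | w n = 0}.Infinite) (x : ℕ) :
    w x = 0 := by
  have hpinv : 0 ≤ (p : ℝ)⁻¹ := by positivity
  have hpinv1 : (p : ℝ)⁻¹ < 1 := inv_lt_one_of_one_lt₀ (by exact_mod_cast hp.1.one_lt)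
  have hnat : ∀ n : ℕ, ‖(n : ℚ_[p])‖ ≤ 1 := fun n => by
    simpa using Padic.norm_int_le_one (p := p) (n : ℤ)
  have hsmall : ∀ K : ℕ, ‖(w x : ℚ_[p])‖ ≤ (p : ℝ) ^ N * (p : ℝ)⁻¹ ^ K := by
    intro K
    obtain ⟨S, hS, hcard⟩ := hinf.exists_subset_card_eq (2 * K)
    have hbound := norm_eval_le_of_card_roots (P := newtonInterp (fun n => (w n : ℚ_[p]))
        (x + S.sup id)) (ε := (p : ℝ) ^ N * (p : ℝ)⁻¹ ^ K) (by positivity)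
        (S.map Nat.castEmbedding) (by simp [hnat]) ?_ ?_ (hnat x)
    · rwa [eval_newtonInterp _ (Nat.le_add_right _ _)] at hbound
    · simp only [Finset.mem_map, forall_exists_index, and_imp, forall_apply_eq_imp_iff₂,
        Nat.castEmbedding_apply, IsRoot]
      intro n hn
      have hle : n ≤ x + S.sup id := (Finset.le_sup (f := id) hn).trans (Nat.le_add_left _ _)
      rw [eval_newtonInterp _ hle, show w n = 0 from hS hn, Int.cast_zero]
    · intro j hj
      rw [Finset.card_map, hcard] at hj
      refine (norm_coeff_newtonInterp_le hp2 hw _ j).trans ?_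
      gcongr ?_ * ?_
      exact pow_le_pow_of_le_one hpinv hpinv1.le (by omega)
  have hlim : Tendsto (fun K : ℕ => (p : ℝ) ^ N * (p : ℝ)⁻¹ ^ K) atTop (nhds 0) := by
    simpa using (tendsto_pow_atTop_nhds_zero_of_lt_one hpinv hpinv1).const_mul ((p : ℝ) ^ N)
  exact_mod_cast norm_le_zero_iff.1 (ge_of_tendsto' hlim hsmall)

end Hansel

/-- `X` is a unit of finite order modulo `(p, Φ)`. -/
lemma exists_X_pow_sub_one_eq {Φ : ℤ[X]} (hΦ : Φ.Monic) {p : ℕ} [hp : Fact p.Prime]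
    (h0 : ¬ (p : ℤ) ∣ Φ.coeff 0) :
    ∃ M > 0, ∃ Z Y : ℤ[X], X ^ M - 1 = C (p : ℤ) * Z + Φ * Y := by
  set π := Int.castRingHom (ZMod p)
  set F : (ZMod p)[X] := Φ.map π
  have : Module.Finite (ZMod p) (AdjoinRoot F) := (hΦ.map π).finite_adjoinRoot
  have : Finite (AdjoinRoot F) := Module.finite_of_finite (ZMod p)
  have hunit : IsUnit (AdjoinRoot.root F) := by
    have hndvd : ¬ X ∣ F := by
      rw [X_dvd_iff, coeff_map, eq_intCast, ZMod.intCast_zmod_eq_zero_iff_dvd]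
      exact h0
    obtain ⟨a, b, hab⟩ := irreducible_X.coprime_iff_not_dvd.2 hndvd
    have hmk := congrArg (AdjoinRoot.mk F) hab
    rw [map_add, map_mul, map_mul, AdjoinRoot.mk_self, mul_zero, add_zero, map_one,
      AdjoinRoot.mk_X, mul_comm] at hmk
    exact IsUnit.of_mul_eq_one _ hmk
  obtain ⟨x, hx⟩ := hunit
  obtain ⟨M, hM, hxM⟩ := isOfFinOrder_iff_pow_eq_one.1 (isOfFinOrder_of_finite x)
  have hmk : AdjoinRoot.mk F (X ^ M - 1) = 0 := by
    rw [map_sub, map_pow, AdjoinRoot.mk_X, ← hx, ← Units.val_pow_eq_pow_val, hxM]; simp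
  obtain ⟨Y', hY'⟩ := AdjoinRoot.mk_eq_zero.1 hmk
  obtain ⟨Y, rfl⟩ := Polynomial.map_surjective π ZMod.intCast_surjective Y'
  have hmap : (X ^ M - 1 - Φ * Y).map π = 0 := by simp [Polynomial.map_sub, hY', F]
  have hdvd : C (p : ℤ) ∣ X ^ M - 1 - Φ * Y := by
    refine (C_dvd_iff_dvd_coeff _ _).2 fun i => ?_
    rw [← ZMod.intCast_zmod_eq_zero_iff_dvd, ← eq_intCast π, ← coeff_map, hmap, coeff_zero]
  obtain ⟨Z, hZ⟩ := hdvd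
  exact ⟨M, hM, Z, Y, by rw [← hZ]; ring⟩

lemma pow_mul_add_pow_mem_span {R : Type*} [CommRing R] (p z f y : R) (N k : ℕ) :
    p ^ N * (p * z + f * y) ^ k ∈ Ideal.span {p ^ k, f ^ N} := by
  rw [add_pow, Finset.mul_sum]
  refine sum_mem fun m hm => ?_
  have hm : m ≤ k := Nat.lt_succ_iff.1 (Finset.mem_range.1 hm)
  obtain hN | hN := le_or_gt N (k - m)
  · refine Ideal.mem_of_dvd _ ?_ (Ideal.subset_span (Set.mem_insert_of_mem _ rfl))
    exact (((pow_dvd_pow f hN).trans ((Dvd.intro _ (mul_pow f y _).symm).mul_left _)).mul_right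
      _).mul_left _
  · refine Ideal.mem_of_dvd _ ?_ (Ideal.subset_span (Set.mem_insert _ _))
    calc p ^ k ∣ p ^ (N + m) := pow_dvd_pow p (by omega)
      _ ∣ _ := ⟨z ^ m * (f * y) ^ (k - m) * k.choose m, by ring⟩

lemma exists_period_of_monic {Φ : ℤ[X]} (hΦ : Φ.Monic) (h0 : Φ.coeff 0 ≠ 0) :
    ∃ M > 0, ∀ (N : ℕ) (u : ℕ → ℤ), aeval (shift ℤ) (Φ ^ N) u = 0 → ∀ r,
      {n | u (M * n + r) = 0}.Infinite → ∀ n, u (M * n + r) = 0 := by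
  obtain ⟨p, hpge, hpp⟩ := Nat.exists_infinite_primes ((Φ.coeff 0).natAbs + 3)
  have : Fact p.Prime := ⟨hpp⟩
  have hndvd : ¬ (p : ℤ) ∣ Φ.coeff 0 := fun h => by
    have := Nat.le_of_dvd (by omega) (Int.natAbs_dvd_natAbs.2 h)
    simp only [Int.natAbs_natCast] at this
    omega
  obtain ⟨M, hM, Z, Y, hZY⟩ := exists_X_pow_sub_one_eq hΦ hndvd
  refine ⟨M, hM, fun N u hu r hinf n => ?_⟩
  refine eq_zero_of_pow_dvd_fwdDiff_iter (p := p) (N := N) (by omega) (fun k => ?_) hinf n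
  obtain ⟨A, B, hAB⟩ := Ideal.mem_span_pair.1 (pow_mul_add_pow_mem_span (C (p : ℤ)) Z Φ Y N k)
  rw [← hZY, ← C_pow, ← C_pow, mul_comm A, ← smul_eq_C_mul, ← smul_eq_C_mul] at hAB
  have h := congrArg (fun P => aeval (shift ℤ) P u r) hAB
  rw [map_add, map_mul _ B, LinearMap.add_apply, Module.End.mul_apply, hu, map_zero, add_zero,
    map_smul, map_smul, LinearMap.smul_apply, LinearMap.smul_apply, Pi.smul_apply, Pi.smul_apply,
    aeval_shift_X_pow_sub_one_pow] at h
  exact ⟨_, h.symm⟩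

section ClearDenominators

variable {A K : Type*} [CommRing A] [IsDomain A] [Field K] [Algebra A K] [IsFractionRing A K]

/-- By the recurrence, a common denominator of the initial values serves all values. -/
lemma exists_isInteger_smul_of_monic {Q : A[X]} (hQ : Q.Monic) {v : ℕ → K}
    (hv : aeval (shift K) (Q.map (algebraMap A K)) v = 0) :
    ∃ b : A, b ≠ 0 ∧ ∀ n, IsLocalization.IsInteger A (b • v n) := by
  obtain ⟨b, hb⟩ := IsLocalization.exist_integer_multiples (nonZeroDivisors A)
    (Finset.range Q.natDegree) v
  refine ⟨b, nonZeroDivisors.coe_ne_zero b, fun n => ?_⟩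
  induction n using Nat.strong_induction_on with
  | _ n ih =>
    obtain hn | hn := lt_or_ge n Q.natDegree
    · exact hb n (Finset.mem_range.2 hn)
    have hrec := congrFun hv (n - Q.natDegree)
    rw [aeval_shift_apply (Nat.lt_succ_of_le natDegree_map_le), Finset.sum_range_succ, coeff_map,
      coeff_natDegree, hQ.leadingCoeff, map_one, one_mul, Nat.sub_add_cancel hn] at hrec
    rw [eq_neg_of_add_eq_zero_right hrec, smul_neg, Finset.smul_sum]
    refine neg_mem (s := (algebraMap A K).range) (sum_mem fun k hk => ?_)
    have hk : k < Q.natDegree := Finset.mem_range.1 hk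
    rw [coeff_map, ← mul_smul_comm]
    exact mul_mem ⟨_, rfl⟩ (ih _ (by omega))

/-- Conjugating by `n ↦ a ^ n` with a common denominator `a` makes the recurrence monic integral. -/
lemma exists_monic_annihilating_integer_multiple {P : K[X]} (hP : P.Monic) (h0 : P.coeff 0 ≠ 0) :
    ∃ Φ : A[X], Φ.Monic ∧ Φ.coeff 0 ≠ 0 ∧ ∀ (N : ℕ) (u : ℕ → K), aeval (shift K) (P ^ N) u = 0 →
      ∃ z : ℕ → A, aeval (shift A) (Φ ^ N) z = 0 ∧ ∀ n, z n = 0 ↔ u n = 0 := by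
  have hinj : Function.Injective (algebraMap A K) := IsFractionRing.injective A K
  let a : A := IsLocalization.commonDenom (nonZeroDivisors A) P.support P.coeff
  have ha : algebraMap A K a ≠ 0 :=
    (map_ne_zero_iff _ hinj).2 (nonZeroDivisors.coe_ne_zero _)
  obtain ⟨Φ, hΦ, -, hΦm⟩ := lifts_and_natDegree_eq_and_monic
    (IsLocalization.scaleRoots_commonDenom_mem_lifts (nonZeroDivisors A) P
      (by rw [hP.leadingCoeff]; exact ⟨1, map_one _⟩)) ((monic_scaleRoots_iff _).2 hP)
  change Φ.map (algebraMap A K) = P.scaleRoots (algebraMap A K a) at hΦ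
  refine ⟨Φ, hΦm, fun h => ?_, fun N u hu => ?_⟩
  · have hcoeff := congrArg (fun Q => Q.coeff 0) hΦ
    simp only [coeff_map, h, map_zero, coeff_scaleRoots] at hcoeff
    exact mul_ne_zero h0 (pow_ne_zero _ ha) hcoeff.symm
  have hmap : aeval (shift K) ((Φ ^ N).map (algebraMap A K))
      (fun n => algebraMap A K a ^ n * u n) = 0 := by
    rw [Polynomial.map_pow, hΦ, ← pow_scaleRoots_of_isReduced, aeval_shift_scaleRoots, hu]
    funext n
    simp
  obtain ⟨b, hb, hint⟩ := exists_isInteger_smul_of_monic (hΦm.pow N) hmap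
  choose z hz using hint
  refine ⟨z, funext fun n => hinj ?_, fun n => ?_⟩
  · rw [← aeval_shift_map, funext hz]
    exact (congrFun ((LinearMap.map_smul_of_tower (aeval (shift K) _) b _).trans
      (congrArg (b • ·) hmap)) n).trans (by simp)
  · rw [← (injective_iff_map_eq_zero' _).1 hinj, hz]
    simp [Algebra.smul_def, hb, ha]

end ClearDenominators

/-- Skolem–Mahler–Lech, with a period depending only on `P` and not on the exponent `N`. -/
lemma exists_period_forall_eq_zero_or_eventually_ne_zero {P : ℚ[X]} (h0 : P.coeff 0 ≠ 0) :
    ∃ M > 0, ∀ (N : ℕ) (u : ℕ → ℚ), aeval (shift ℚ) (P ^ N) u = 0 → ∀ r,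
      (∀ n, u (M * n + r) = 0) ∨ ∀ᶠ n in atTop, u (M * n + r) ≠ 0 := by
  have hP : P ≠ 0 := by rintro rfl; simp at h0
  obtain ⟨Φ, hΦm, hΦ0, hΦ⟩ := exists_monic_annihilating_integer_multiple (A := ℤ)
    (monic_mul_leadingCoeff_inv hP) (by simp [h0, hP])
  obtain ⟨M, hM, hperiod⟩ := exists_period_of_monic hΦm hΦ0
  refine ⟨M, hM, fun N u hu r => ?_⟩
  obtain ⟨z, hz, hzu⟩ := hΦ N u (by rw [mul_pow, mul_comm, map_mul, Module.End.mul_apply, hu,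
    map_zero])
  have hclass := hperiod N z hz r
  simp only [hzu] at hclass
  refine or_iff_not_imp_right.2 fun h => hclass ?_
  exact Nat.frequently_atTop_iff_infinite.1 h

/-! ### Sequences annihilated by a power of `P(E)` -/

section PowKer

variable {K : Type*} [Field K] {P : K[X]}

/-- The space of sequences annihilated by some power of `P(E)`. -/
noncomputable def powKer (P : K[X]) : Submodule K (ℕ → K) :=
  (aeval (shift K) P).maxGenEigenspace 0

lemma mem_powKer {u : ℕ → K} : u ∈ powKer P ↔ ∃ N : ℕ, aeval (shift K) (P ^ N) u = 0 := by
  simp [powKer, Module.End.mem_maxGenEigenspace]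

lemma aeval_shift_mem_powKer (Q : K[X]) {u : ℕ → K} (hu : u ∈ powKer P) :
    aeval (shift K) Q u ∈ powKer P :=
  Module.End.mapsTo_maxGenEigenspace_of_comm ((Commute.all P Q).map (aeval (shift K))) 0 hu

lemma comp_add_mem_powKer (k : ℕ) {u : ℕ → K} (hu : u ∈ powKer P) :
    (fun n => u (n + k)) ∈ powKer P := by
  convert! aeval_shift_mem_powKer (X ^ k) hu using 1
  funext n
  rw [map_pow, aeval_X, shift_pow_apply]

lemma eventually_aeval_shift_congr (Q : K[X]) {u v : ℕ → K} (h : ∀ᶠ n in atTop, u n = v n) :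
    ∀ᶠ n in atTop, aeval (shift K) Q u n = aeval (shift K) Q v n := by
  filter_upwards [eventually_forall_ge_atTop.2 h] with n hn using aeval_shift_congr Q hn

/-- The trailing coefficient allows one to solve the recurrence `Q(E) u = 0` backwards. -/
lemma eq_zero_of_eventually_eq_zero {Q : K[X]} (hQ : Q ≠ 0) {u : ℕ → K} {n₀ : ℕ}
    (h : ∀ n ≥ n₀, aeval (shift K) Q u n = 0) (hu : ∀ᶠ n in atTop, u n = 0) :
    ∀ n ≥ n₀ + Q.natTrailingDegree, u n = 0 := by
  obtain ⟨B, hB⟩ := eventually_atTop.1 hu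
  suffices ∀ j, ∀ m ≥ n₀ + Q.natTrailingDegree, B ≤ m + j → u m = 0 from
    fun n hn => this B n hn (Nat.le_add_left B n)
  intro j
  induction j with
  | zero => exact fun m _ hm => hB m hm
  | succ j ih =>
    intro m hm hj
    have hrec := h (m - Q.natTrailingDegree) (by omega)
    rw [aeval_shift_apply (Nat.lt_succ_self _), Finset.sum_eq_single Q.natTrailingDegree,
      Nat.sub_add_cancel (by omega)] at hrec
    · exact (mul_eq_zero.1 hrec).resolve_left (trailingCoeff_nonzero_iff_nonzero.2 hQ)
    · intro k _ hk
      obtain hlt | hgt := lt_or_gt_of_ne hk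
      · rw [coeff_eq_zero_of_lt_natTrailingDegree hlt, zero_mul]
      · rw [ih _ (by omega) (by omega), mul_zero]
    · intro hmem
      have := natTrailingDegree_le_natDegree Q
      exact absurd (Finset.mem_range.2 (by omega)) hmem

lemma eq_zero_of_mem_powKer (hP : P.coeff 0 ≠ 0) {u : ℕ → K} (hu : u ∈ powKer P)
    (h : ∀ᶠ n in atTop, u n = 0) : u = 0 := by
  obtain ⟨N, hN⟩ := mem_powKer.1 hu
  have hcoeff : (P ^ N).coeff 0 ≠ 0 := by
    simpa only [coeff_zero_eq_eval_zero, eval_pow] using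
      pow_ne_zero N (coeff_zero_eq_eval_zero P ▸ hP)
  have hne : P ^ N ≠ 0 := fun h0 => hcoeff (by rw [h0, coeff_zero])
  funext n
  refine eq_zero_of_eventually_eq_zero hne (n₀ := 0) (fun m _ => congrFun hN m) h n ?_
  rw [natTrailingDegree_eq_zero.2 (Or.inr hcoeff)]
  exact Nat.zero_le n

lemma exists_extension_annihilated {Q : K[X]} (hQ : Q.coeff 0 ≠ 0) {n₀ : ℕ} {u : ℕ → K}
    (h : ∀ n ≥ n₀, aeval (shift K) Q u n = 0) :
    ∃ u' : ℕ → K, aeval (shift K) Q u' = 0 ∧ ∀ n ≥ n₀, u n = u' n := by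
  induction n₀ generalizing u with
  | zero => exact ⟨u, funext fun n => h n n.zero_le, fun _ _ => rfl⟩
  | succ n₀ ih =>
    let δ : ℕ → K := Pi.single n₀ (aeval (shift K) Q u n₀ / Q.coeff 0)
    have hδ : ∀ n > n₀, δ n = 0 := fun n hn => Pi.single_eq_of_ne (by omega) _
    obtain ⟨u', hu', huu'⟩ := ih (u := u - δ) fun n hn => by
      rw [map_sub, Pi.sub_apply, aeval_shift_apply (Nat.lt_succ_self _) δ,
        Finset.sum_range_succ', Finset.sum_eq_zero fun k _ => by rw [hδ _ (by omega), mul_zero],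
        zero_add, add_zero]
      obtain rfl | hlt := hn.eq_or_lt
      · rw [show δ n₀ = _ from Pi.single_eq_same _ _, mul_div_cancel₀ _ hQ, sub_self]
      · rw [hδ n hlt, h n hlt, mul_zero, sub_zero]
    exact ⟨u', hu', fun n hn => by rw [← huu' n (by omega), Pi.sub_apply, hδ n hn, sub_zero]⟩

lemma exists_mem_powKer_eventually_eq (hP : P.coeff 0 ≠ 0) {χ : K[X]} {m : ℕ}
    (hχ : χ ∣ X ^ m * P) {u ρ : ℕ → K} (hρ : ρ ∈ powKer P)
    (h : ∀ᶠ n in atTop, aeval (shift K) χ u n = ρ n) :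
    ∃ u' ∈ powKer P, ∀ᶠ n in atTop, u n = u' n := by
  obtain ⟨N, hN⟩ := mem_powKer.1 hρ
  obtain ⟨σ, hσ⟩ := hχ
  have hprod : P ^ N * σ * χ = X ^ m * P ^ (N + 1) := by
    rw [pow_succ]; linear_combination (- P ^ N) * hσ
  have hann := eventually_aeval_shift_congr (P ^ N * σ) h
  rw [← Module.End.mul_apply, ← map_mul, hprod, mul_comm _ σ, map_mul _ σ, Module.End.mul_apply,
    hN, map_zero, map_mul, map_pow, aeval_X] at hann
  simp only [Module.End.mul_apply, shift_pow_apply] at hann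
  obtain ⟨B, hB⟩ := eventually_atTop.1 hann
  have hcoeff : (P ^ (N + 1)).coeff 0 ≠ 0 := by
    simpa only [coeff_zero_eq_eval_zero, eval_pow] using
      pow_ne_zero (N + 1) (coeff_zero_eq_eval_zero P ▸ hP)
  obtain ⟨u', hu', huu'⟩ := exists_extension_annihilated hcoeff (n₀ := B + m) (u := u)
    fun n hn => by simpa [Nat.sub_add_cancel (by omega : m ≤ n)] using hB (n - m) (by omega)
  exact ⟨u', mem_powKer.2 ⟨N + 1, hu'⟩, eventually_atTop.2 ⟨_, huu'⟩⟩

/-- The coefficient of `t ^ ν` in `Ξ(E) v`, where `Ξ = ∑ Ξ l * t ^ l` and `v = ∑ v ν * t ^ ν`. -/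
noncomputable def cauchyConv (Ξ : ℕ → K[X]) (v : ℕ → ℕ → K) (ν : ℕ) : ℕ → K :=
  ∑ l ∈ Finset.range (ν + 1), aeval (shift K) (Ξ l) (v (ν - l))

variable {Ξ : ℕ → K[X]} {u v γ : ℕ → ℕ → K}

lemma cauchyConv_sub (ν : ℕ) : cauchyConv Ξ (v - u) ν = cauchyConv Ξ v ν - cauchyConv Ξ u ν := by
  simp [cauchyConv]

lemma cauchyConv_eq_add (ν : ℕ) : cauchyConv Ξ v ν = aeval (shift K) (Ξ 0) (v ν) +
    ∑ l ∈ Finset.range ν, aeval (shift K) (Ξ (l + 1)) (v (ν - (l + 1))) := by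
  rw [cauchyConv, Finset.sum_range_succ', add_comm, Nat.sub_zero]

lemma cauchyConv_mem_powKer (hu : ∀ ν, u ν ∈ powKer P) (ν : ℕ) : cauchyConv Ξ u ν ∈ powKer P :=
  sum_mem fun _ _ => aeval_shift_mem_powKer _ (hu _)

lemma eventually_cauchyConv_congr (h : ∀ ν, ∀ᶠ n in atTop, v ν n = u ν n) (ν : ℕ) :
    ∀ᶠ n in atTop, cauchyConv Ξ v ν n = cauchyConv Ξ u ν n := by
  have hall : ∀ᶠ n in atTop, ∀ l ∈ Finset.range (ν + 1),
      aeval (shift K) (Ξ l) (v (ν - l)) n = aeval (shift K) (Ξ l) (u (ν - l)) n :=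
    (eventually_all_finset _).2 fun l _ => eventually_aeval_shift_congr _ (h _)
  filter_upwards [hall] with n hn
  simpa only [cauchyConv, Finset.sum_apply] using Finset.sum_congr rfl hn

lemma exists_mem_powKer_of_cauchyConv (hP : P.coeff 0 ≠ 0) {m : ℕ} (hdvd : Ξ 0 ∣ X ^ m * P)
    (hγ : ∀ ν, γ ν ∈ powKer P) (hv : ∀ ν, ∀ᶠ n in atTop, cauchyConv Ξ v ν n = γ ν n) (ν : ℕ) :
    ∃ u ∈ powKer P, ∀ᶠ n in atTop, v ν n = u n := by
  induction ν using Nat.strong_induction_on with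
  | _ ν ih =>
    choose! u hu hvu using ih
    have hlt : ∀ l ∈ Finset.range ν, ν - (l + 1) < ν := fun l hl => by
      have := Finset.mem_range.1 hl; omega
    refine exists_mem_powKer_eventually_eq hP hdvd (u := v ν)
      (sub_mem (hγ ν) (sum_mem fun l hl => aeval_shift_mem_powKer (Ξ (l + 1)) (hu _ (hlt l hl)))) ?_
    have hall := (eventually_all_finset _).2 fun l hl =>
      eventually_aeval_shift_congr (Ξ (l + 1)) (hvu _ (hlt l hl))
    filter_upwards [hall, hv ν] with n hn hconv
    rw [cauchyConv_eq_add, Pi.add_apply, Finset.sum_apply, Finset.sum_congr rfl hn] at hconv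
    rw [Pi.sub_apply, ← hconv, Finset.sum_apply, add_sub_cancel_right]

/-- Each step of the recursion in `ν` costs at most the order `e` of the recurrence. -/
lemma eq_zero_of_cauchyConv_eq_zero (h0 : Ξ 0 ≠ 0) {e n₀ : ℕ} (hΞ : ∀ l, (Ξ l).natDegree ≤ e)
    (hv : ∀ ν, ∀ n ≥ n₀ + ν, cauchyConv Ξ v ν n = 0) (hev : ∀ ν, ∀ᶠ n in atTop, v ν n = 0)
    (ν : ℕ) : ∀ n ≥ n₀ + e + (e + 1) * ν, v ν n = 0 := by
  induction ν using Nat.strong_induction_on with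
  | _ ν ih =>
    have hrec : ∀ n ≥ n₀ + (e + 1) * ν, aeval (shift K) (Ξ 0) (v ν) n = 0 := by
      intro n hn
      rw [← hv ν n (hn.trans' (by nlinarith)), cauchyConv_eq_add, Pi.add_apply, left_eq_add,
        Finset.sum_apply]
      refine Finset.sum_eq_zero fun l hl => ?_
      have hl := Finset.mem_range.1 hl
      have hstep : (e + 1) * (ν - (l + 1)) + (e + 1) ≤ (e + 1) * ν := by
        rw [← Nat.mul_succ]
        exact Nat.mul_le_mul_left _ (by omega)
      rw [aeval_shift_congr (v := 0) _ fun k hk => ih _ (by omega) k (by omega), map_zero,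
        Pi.zero_apply]
    intro n hn
    have htrail := natTrailingDegree_le_natDegree (Ξ 0)
    exact eq_zero_of_eventually_eq_zero h0 hrec (hev ν) n (by have := hΞ 0; omega)

lemma exists_cauchyConv_eq (hP : P.coeff 0 ≠ 0) {e m n₀ : ℕ} (hΞ : ∀ l, (Ξ l).natDegree ≤ e)
    (h0 : Ξ 0 ≠ 0) (hdvd : Ξ 0 ∣ X ^ m * P) (hγ : ∀ ν, γ ν ∈ powKer P)
    (hv : ∀ ν, ∀ n ≥ n₀ + ν, cauchyConv Ξ v ν n = γ ν n) :
    ∃ u : ℕ → ℕ → K, (∀ ν, u ν ∈ powKer P) ∧ (∀ ν, cauchyConv Ξ u ν = γ ν) ∧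
      ∀ ν, ∀ n ≥ n₀ + e + (e + 1) * ν, v ν n = u ν n := by
  have hv' : ∀ ν, ∀ᶠ n in atTop, cauchyConv Ξ v ν n = γ ν n := fun ν =>
    eventually_atTop.2 ⟨_, hv ν⟩
  choose u hu hvu using exists_mem_powKer_of_cauchyConv hP hdvd hγ hv'
  have hexact : ∀ ν, cauchyConv Ξ u ν = γ ν := fun ν => by
    refine sub_eq_zero.1 (eq_zero_of_mem_powKer hP
      (sub_mem (cauchyConv_mem_powKer hu ν) (hγ ν)) ?_)
    filter_upwards [eventually_cauchyConv_congr (Ξ := Ξ) hvu ν, hv' ν] with n hn hn'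
    rw [Pi.sub_apply, ← hn, hn', sub_self]
  refine ⟨u, hu, hexact, fun ν n hn => sub_eq_zero.1 ?_⟩
  refine eq_zero_of_cauchyConv_eq_zero (v := v - u) h0 hΞ (fun ν n hn => ?_) (fun ν => ?_) ν n hn
  · rw [cauchyConv_sub, Pi.sub_apply, hv ν n hn, hexact, sub_self]
  · filter_upwards [hvu ν] with n hn using sub_eq_zero.2 hn

end PowKer

/-! ### Orders of Laurent series -/

section LaurentOrder

variable {K : Type*} [Field K] {x y : K⸨X⸩} {a b : ℤ} {c d : ℚ}

/-- The variable of `K⸨X⸩`, written `t` to keep `X` for polynomial variables. -/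
noncomputable def t : K⸨X⸩ := HahnSeries.single 1 1

/-- The lower bound `c ≤ ord x`, which holds for every `c` if `x = 0`. -/
def OrderGE (x : K⸨X⸩) (c : ℚ) : Prop := ∀ i : ℤ, (i : ℚ) < c → x.coeff i = 0

/-- The equality `ord x = a` for a nonzero `x`. -/
def HasOrder (x : K⸨X⸩) (a : ℤ) : Prop := x ≠ 0 ∧ x.order = a

lemma orderGE_iff : OrderGE x c ↔ x = 0 ∨ c ≤ x.order := by
  refine ⟨fun h => or_iff_not_imp_left.2 fun hx => not_lt.1 fun hc => ?_, ?_⟩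
  · exact HahnSeries.coeff_order_eq_zero.not.2 hx (h _ hc)
  · rintro (rfl | h) i hi
    · rfl
    · exact HahnSeries.coeff_eq_zero_of_lt_order (by exact_mod_cast hi.trans_le h)

lemma orderGE_order (x : K⸨X⸩) : OrderGE x x.order := orderGE_iff.2 (Or.inr le_rfl)

lemma orderGE_zero (c : ℚ) : OrderGE (0 : K⸨X⸩) c := fun _ _ => rfl

lemma OrderGE.mono (h : OrderGE x c) (hd : d ≤ c) : OrderGE x d := fun i hi => h i (hi.trans_le hd)

lemma OrderGE.add (hx : OrderGE x c) (hy : OrderGE y c) : OrderGE (x + y) c := fun i hi => by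
  rw [HahnSeries.coeff_add, hx i hi, hy i hi, add_zero]

lemma OrderGE.neg (hx : OrderGE x c) : OrderGE (-x) c := fun i hi => by
  rw [HahnSeries.coeff_neg, hx i hi, neg_zero]

lemma OrderGE.sub (hx : OrderGE x c) (hy : OrderGE y c) : OrderGE (x - y) c :=
  sub_eq_add_neg x y ▸ hx.add hy.neg

lemma OrderGE.sum {ι : Type*} {s : Finset ι} {z : ι → K⸨X⸩} (h : ∀ i ∈ s, OrderGE (z i) c) :
    OrderGE (∑ i ∈ s, z i) c :=
  Finset.sum_induction _ (OrderGE · c) (fun _ _ => OrderGE.add) (orderGE_zero c) h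

lemma OrderGE.mul (hx : OrderGE x c) (hy : OrderGE y d) : OrderGE (x * y) (c + d) := by
  obtain rfl | hx0 := eq_or_ne x 0
  · simpa using orderGE_zero _
  obtain rfl | hy0 := eq_or_ne y 0
  · simpa using orderGE_zero _
  have hxc := (orderGE_iff.1 hx).resolve_left hx0
  have hyd := (orderGE_iff.1 hy).resolve_left hy0
  refine orderGE_iff.2 (Or.inr ?_)
  rw [HahnSeries.order_mul hx0 hy0]
  push_cast
  exact add_le_add hxc hyd

lemma eq_zero_of_forall_orderGE (h : ∀ c, OrderGE x c) : x = 0 := by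
  ext i
  exact h (i + 1) i (lt_add_one _)

lemma hasOrder_iff : HasOrder x a ↔ x.coeff a ≠ 0 ∧ OrderGE x a := by
  constructor
  · rintro ⟨hx, rfl⟩
    exact ⟨HahnSeries.coeff_order_eq_zero.not.2 hx, orderGE_order x⟩
  · rintro ⟨ha, h⟩
    have hx : x ≠ 0 := by rintro rfl; exact ha rfl
    exact ⟨hx, le_antisymm (HahnSeries.order_le_of_coeff_ne_zero ha)
      (by exact_mod_cast (orderGE_iff.1 h).resolve_left hx)⟩

lemma HasOrder.orderGE (h : HasOrder x a) : OrderGE x a := (hasOrder_iff.1 h).2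

lemma HasOrder.mul (hx : HasOrder x a) (hy : HasOrder y b) : HasOrder (x * y) (a + b) :=
  ⟨mul_ne_zero hx.1 hy.1, by rw [HahnSeries.order_mul hx.1 hy.1, hx.2, hy.2]⟩

lemma HasOrder.orderGE_of_mul (hx : HasOrder x a) (h : OrderGE (x * y) (a + c)) : OrderGE y c := by
  obtain rfl | hy := eq_or_ne y 0
  · exact orderGE_zero c
  have hle := (orderGE_iff.1 h).resolve_left (mul_ne_zero hx.1 hy)
  rw [HahnSeries.order_mul hx.1 hy, hx.2] at hle
  push_cast at hle
  exact orderGE_iff.2 (Or.inr (le_of_add_le_add_left hle))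

lemma HasOrder.add_orderGE (hx : HasOrder x a) (hy : OrderGE y c) (hc : (a : ℚ) < c) :
    HasOrder (x + y) a := by
  obtain ⟨hxa, hx⟩ := hasOrder_iff.1 hx
  exact hasOrder_iff.2 ⟨by rwa [HahnSeries.coeff_add, hy a hc, add_zero], hx.add (hy.mono hc.le)⟩

lemma t_zpow (a : ℤ) : (t : K⸨X⸩) ^ a = HahnSeries.single a 1 := (RatFunc.single_zpow a).symm

lemma t_ne_zero : (t : K⸨X⸩) ≠ 0 := HahnSeries.single_ne_zero one_ne_zero

lemma hasOrder_t_zpow (a : ℤ) : HasOrder (t ^ a : K⸨X⸩) a :=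
  ⟨zpow_ne_zero a t_ne_zero, by rw [t_zpow, HahnSeries.order_single one_ne_zero]⟩

lemma hasOrder_t_pow (n : ℕ) : HasOrder (t ^ n : K⸨X⸩) n := by
  exact_mod_cast hasOrder_t_zpow (K := K) n

/-- The Laurent series `t ^ a * ∑ u n * t ^ n`. -/
noncomputable def ofCoeffs (a : ℤ) (u : ℕ → K) : K⸨X⸩ :=
  t ^ a * HahnSeries.ofPowerSeries ℤ K (PowerSeries.mk u)

lemma coeff_ofCoeffs (a : ℤ) (u : ℕ → K) (n : ℕ) : (ofCoeffs a u).coeff (a + n) = u n := by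
  rw [ofCoeffs, t_zpow, HahnSeries.coeff_single_mul, add_sub_cancel_left, one_mul,
    HahnSeries.ofPowerSeries_apply_coeff, PowerSeries.coeff_mk]

lemma orderGE_ofCoeffs (a : ℤ) (u : ℕ → K) : OrderGE (ofCoeffs a u) a := by
  intro i hi
  rw [ofCoeffs, t_zpow, HahnSeries.coeff_single_mul, one_mul, HahnSeries.ofPowerSeries_apply,
    HahnSeries.embDomain_of_notMem_range]
  rintro ⟨n, hn⟩
  have hn' : (n : ℤ) = i - a := hn
  have hlt : i < a := by exact_mod_cast hi
  omega

lemma exists_eq_add_natCast_of_not_lt {i : ℤ} (h : ¬ (i : ℚ) < a) : ∃ n : ℕ, i = a + n := by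
  have hle : a ≤ i := by exact_mod_cast not_lt.1 h
  exact ⟨(i - a).toNat, by omega⟩

lemma OrderGE.ofCoeffs_eq (h : OrderGE x a) : ofCoeffs a (fun n => x.coeff (a + n)) = x := by
  ext i
  by_cases hi : (i : ℚ) < a
  · rw [h i hi, orderGE_ofCoeffs a _ i hi]
  · obtain ⟨n, rfl⟩ := exists_eq_add_natCast_of_not_lt hi
    rw [coeff_ofCoeffs]

lemma ofCoeffs_mul_ofCoeffs (u v : ℕ → K) : ofCoeffs a u * ofCoeffs b v =
    ofCoeffs (a + b) (fun n => ∑ l ∈ Finset.range (n + 1), u l * v (n - l)) := by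
  simp only [ofCoeffs, mul_mul_mul_comm, ← zpow_add₀ t_ne_zero, ← map_mul]
  congr 2
  ext n
  rw [PowerSeries.coeff_mul, PowerSeries.coeff_mk, Finset.Nat.sum_antidiagonal_eq_sum_range_succ_mk]
  simp only [PowerSeries.coeff_mk]

lemma coeff_mul_add_natCast (hx : OrderGE x a) (hy : OrderGE y b) (n : ℕ) :
    (x * y).coeff (a + b + n) =
      ∑ l ∈ Finset.range (n + 1), x.coeff (a + l) * y.coeff (b + (n - l : ℕ)) := by
  conv_lhs => rw [← hx.ofCoeffs_eq, ← hy.ofCoeffs_eq, ofCoeffs_mul_ofCoeffs, coeff_ofCoeffs]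

end LaurentOrder

/-! ### Asymptotic lower bounds for orders -/

lemma tendsto_mul_add_atTop {M : ℕ} (hM : 0 < M) (r : ℕ) :
    Tendsto (fun n => M * n + r) atTop atTop :=
  tendsto_atTop_mono (fun n => (Nat.le_mul_of_pos_left n hM).trans le_self_add) tendsto_id

section AsympOrder

variable {K : Type*} [Field K] {x y : ℕ → K⸨X⸩} {φ ψ : ℕ → ℚ}

/-- The bound `ord (x n) ≥ φ n - O(1)` for large `n`. -/
def AsympOrderGE (x : ℕ → K⸨X⸩) (φ : ℕ → ℚ) : Prop :=
  ∃ C : ℚ, ∀ᶠ n in atTop, OrderGE (x n) (φ n - C)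

lemma asympOrderGE_of_le_add (h : ∀ᶠ n in atTop, OrderGE (x n) (ψ n)) (C : ℚ)
    (hφ : ∀ᶠ n in atTop, φ n ≤ ψ n + C) : AsympOrderGE x φ := by
  refine ⟨C, ?_⟩
  filter_upwards [h, hφ] with n hn hC using hn.mono (by linarith)

lemma AsympOrderGE.mono_add (h : AsympOrderGE x ψ) (C : ℚ) (hφ : ∀ᶠ n in atTop, φ n ≤ ψ n + C) :
    AsympOrderGE x φ := by
  obtain ⟨B, hB⟩ := h
  refine asympOrderGE_of_le_add hB (C + B) ?_
  filter_upwards [hφ] with n hn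
  linarith

lemma AsympOrderGE.add (hx : AsympOrderGE x φ) (hy : AsympOrderGE y φ) :
    AsympOrderGE (fun n => x n + y n) φ := by
  obtain ⟨A, hA⟩ := hx
  obtain ⟨B, hB⟩ := hy
  refine ⟨max A B, ?_⟩
  filter_upwards [hA, hB] with n hAn hBn
  exact (hAn.mono (by gcongr; exact le_max_left A B)).add
    (hBn.mono (by gcongr; exact le_max_right A B))

lemma AsympOrderGE.neg (hx : AsympOrderGE x φ) : AsympOrderGE (fun n => -x n) φ := by
  obtain ⟨A, hA⟩ := hx
  exact ⟨A, hA.mono fun n hn => hn.neg⟩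

lemma AsympOrderGE.sub (hx : AsympOrderGE x φ) (hy : AsympOrderGE y φ) :
    AsympOrderGE (fun n => x n - y n) φ := by
  simpa only [sub_eq_add_neg] using hx.add hy.neg

lemma asympOrderGE_zero (φ : ℕ → ℚ) : AsympOrderGE (fun _ => (0 : K⸨X⸩)) φ :=
  ⟨0, Eventually.of_forall fun _ => orderGE_zero _⟩

lemma AsympOrderGE.sum {ι : Type*} {s : Finset ι} {z : ι → ℕ → K⸨X⸩}
    (h : ∀ i ∈ s, AsympOrderGE (z i) φ) : AsympOrderGE (fun n => ∑ i ∈ s, z i n) φ := by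
  classical
  induction s using Finset.induction_on with
  | empty => simpa using asympOrderGE_zero φ
  | insert i s hi ih =>
    simp only [Finset.sum_insert hi]
    exact (h i (Finset.mem_insert_self i s)).add (ih fun j hj => h j (Finset.mem_insert_of_mem hj))

lemma AsympOrderGE.mul (hx : AsympOrderGE x φ) (hy : AsympOrderGE y ψ) :
    AsympOrderGE (fun n => x n * y n) (fun n => φ n + ψ n) := by
  obtain ⟨A, hA⟩ := hx
  obtain ⟨B, hB⟩ := hy
  refine ⟨A + B, ?_⟩
  filter_upwards [hA, hB] with n hAn hBn using (hAn.mul hBn).mono (by linarith)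

lemma AsympOrderGE.comp_tendsto (hx : AsympOrderGE x φ) {s : ℕ → ℕ} (hs : Tendsto s atTop atTop) :
    AsympOrderGE (fun n => x (s n)) (fun n => φ (s n)) := by
  obtain ⟨C, hC⟩ := hx
  exact ⟨C, hs.eventually hC⟩

lemma asympOrderGE_const (c : K⸨X⸩) : AsympOrderGE (fun _ => c) 0 :=
  ⟨-c.order, Eventually.of_forall fun _ => (orderGE_order c).mono (by simp)⟩

lemma asympOrderGE_t_pow : AsympOrderGE (fun n => (t : K⸨X⸩) ^ n) (fun n => n) :=
  ⟨0, Eventually.of_forall fun n => (hasOrder_t_pow n).orderGE.mono (by simp)⟩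

lemma asympOrderGE_eval_t_pow (p : K⸨X⸩[X]) :
    AsympOrderGE (fun n => p.eval (t ^ n)) 0 := by
  simp only [eval_eq_sum_range]
  refine AsympOrderGE.sum fun j _ => ?_
  refine ((asympOrderGE_const (p.coeff j)).mul (ψ := 0) ?_).mono_add 0 (by simp)
  refine asympOrderGE_of_le_add (ψ := fun n => ((n * j : ℕ) : ℚ)) (.of_forall fun n => ?_) 0
    (.of_forall fun n => by simpa using by positivity)
  rw [← pow_mul]
  exact_mod_cast (hasOrder_t_pow (n * j)).orderGE

end AsympOrder

/-! ### Bootstrapping lower bounds along a recurrence -/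

section Bootstrap

variable {K : Type*} [Field K]

/-- If the term `k = ks` dominates, each use of the recurrence improves a lower bound `φ` for the
order of `h` by `ε`, until the target `ψ` is reached. -/
lemma orderGE_of_dominant {e N ks : ℕ} {b : ℕ → ℕ → K⸨X⸩} {h g : ℕ → K⸨X⸩} {Bs : ℕ → ℤ}
    {φ ψ : ℕ → ℚ} {ε : ℚ} (hε : 0 < ε) (hks : ks ≤ e)
    (hrec : ∀ n ≥ N, ∑ k ∈ Finset.range (e + 1), b k n * h (n + k) = g n)
    (hdom : ∀ n ≥ N, HasOrder (b ks n) (Bs n))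
    (hother : ∀ n ≥ N, ∀ k ≤ e, k ≠ ks → ∃ B : ℚ, OrderGE (b k n) B ∧
      Bs n + φ (n + ks) + ε ≤ B + φ (n + k) ∧ Bs n + ψ (n + ks) ≤ B + ψ (n + k))
    (hg : ∀ n ≥ N, OrderGE (g n) (Bs n + ψ (n + ks)))
    (hφ : ∀ n ≥ N, OrderGE (h n) (φ n))
    (hψ : ∀ n ≥ N, n < N + ks → OrderGE (h n) (ψ n)) :
    ∀ n ≥ N, OrderGE (h n) (ψ n) := by
  have himprove : ∀ i : ℕ, ∀ n ≥ N, OrderGE (h n) (min (ψ n) (φ n + i * ε)) := by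
    intro i
    induction i with
    | zero => exact fun n hn => (hφ n hn).mono (by simp)
    | succ i ih =>
      intro n hn
      by_cases hinit : n < N + ks
      · exact (hψ n hn hinit).mono (min_le_left _ _)
      obtain ⟨n, rfl⟩ : ∃ m, n = m + ks := ⟨n - ks, by omega⟩
      have hn : n ≥ N := by omega
      refine (hdom n hn).orderGE_of_mul ?_
      rw [eq_sub_of_add_eq ((Finset.add_sum_erase _ _
        (Finset.mem_range_succ_iff.2 hks)).trans (hrec n hn))]
      refine ((hg n hn).mono (by gcongr; exact min_le_left _ _)).sub (OrderGE.sum fun k hk => ?_)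
      obtain ⟨hne, hk⟩ := Finset.mem_erase.1 hk
      obtain ⟨B, hB, hφk, hψk⟩ := hother n hn k (Finset.mem_range_succ_iff.1 hk) hne
      refine (hB.mul (ih (n + k) (by omega))).mono ?_
      rw [← min_add_add_left, ← min_add_add_left]
      refine le_min ((min_le_left _ _).trans hψk) ((min_le_right _ _).trans ?_)
      push_cast
      linarith
  intro n hn
  obtain ⟨i, hi⟩ := exists_nat_ge ((ψ n - φ n) / ε)
  rw [div_le_iff₀ hε] at hi
  exact (himprove i n hn).mono (le_min le_rfl (by linarith))

lemma asympOrderGE_of_dominant {e ks : ℕ} {b : ℕ → ℕ → K⸨X⸩} {h g : ℕ → K⸨X⸩} {Bs : ℕ → ℤ}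
    {φ ψ : ℕ → ℚ} {ε : ℚ} (hε : 0 < ε) (hks : ks ≤ e)
    (hrec : ∀ᶠ n in atTop, ∑ k ∈ Finset.range (e + 1), b k n * h (n + k) = g n)
    (hdom : ∀ᶠ n in atTop, HasOrder (b ks n) (Bs n))
    (hother : ∀ k ≤ e, k ≠ ks → ∃ B : ℕ → ℚ, ∀ᶠ n in atTop, OrderGE (b k n) (B n) ∧
      Bs n + φ (n + ks) + ε ≤ B n + φ (n + k) ∧ Bs n + ψ (n + ks) ≤ B n + ψ (n + k))
    (hg : AsympOrderGE g (fun n => Bs n + ψ (n + ks))) (hφ : AsympOrderGE h φ) :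
    AsympOrderGE h ψ := by
  obtain ⟨A, hA⟩ := hg
  obtain ⟨C, hC⟩ := hφ
  have hother' : ∀ᶠ n in atTop, ∀ k ∈ Finset.range (e + 1), k ≠ ks → ∃ B : ℚ,
      OrderGE (b k n) B ∧ Bs n + φ (n + ks) + ε ≤ B + φ (n + k) ∧
        Bs n + ψ (n + ks) ≤ B + ψ (n + k) := by
    refine (eventually_all_finset _).2 fun k hk => ?_
    obtain rfl | hne := eq_or_ne k ks
    · exact .of_forall fun n hne => absurd rfl hne
    · obtain ⟨B, hB⟩ := hother k (Finset.mem_range_succ_iff.1 hk) hne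
      exact hB.mono fun n hn _ => ⟨B n, hn⟩
  obtain ⟨N, hN⟩ := eventually_atTop.1
    (hrec.and (hdom.and (hother'.and (hA.and hC))))
  choose hrec hdom hother hA hC using hN
  obtain ⟨D, hD⟩ := ((Finset.range (N + ks)).image fun n => ψ n - φ n + C).exists_le
  simp only [Finset.mem_image, Finset.mem_range, forall_exists_index, and_imp,
    forall_apply_eq_imp_iff₂] at hD
  refine ⟨max A D, eventually_atTop.2 ⟨N, ?_⟩⟩
  refine orderGE_of_dominant hε hks (φ := fun n => φ n - C) (ψ := fun n => ψ n - max A D) hrec hdom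
    (fun n hn k hk hne => ?_) (fun n hn => (hA n hn).mono ?_) hC fun n hn hlt => (hC n hn).mono ?_
  · obtain ⟨B, hB, hφk, hψk⟩ := hother n hn k (Finset.mem_range_succ_iff.2 hk) hne
    exact ⟨B, hB, by linarith, by linarith⟩
  · linarith [le_max_left A D]
  · linarith [le_max_right A D, hD n hlt]

/-- Minimizing `A k` and then `k` also minimizes `A k + k`, because the divided differences of `A`
are integers. -/
lemma exists_min_and_min_add (I : Finset ℕ) (hI : I.Nonempty) (A : ℕ → ℤ)
    (hA : ∀ k ∈ I, ∀ l ∈ I, (k : ℤ) - l ∣ A k - A l) :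
    ∃ ks ∈ I, ∀ k ∈ I, A ks ≤ A k ∧ A ks + ks ≤ A k + k := by
  obtain ⟨ks, hks, hmin⟩ := I.exists_min_image (fun k => toLex (A k, k)) hI
  refine ⟨ks, hks, fun k hk => ?_⟩
  obtain hlt | ⟨heq, hle⟩ := Prod.Lex.toLex_le_toLex.1 (hmin k hk)
  · have hlt : A ks < A k := hlt
    have hle : (ks : ℤ) - k ≤ A k - A ks :=
      Int.le_of_dvd (sub_pos.2 hlt) ((dvd_sub_comm).1 (hA ks hks k hk))
    exact ⟨hlt.le, by linarith⟩
  · exact ⟨heq.le, add_le_add heq.le (by exact_mod_cast hle)⟩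

end Bootstrap

/-! ### Laurent series with coefficients annihilated by powers of `P(E)` -/

section LaurentPowKer

variable {K : Type*} [Field K] {P : K[X]}

/-- Sequences of Laurent series, bounded below, whose coefficients are annihilated by powers of
`P(E)`. -/
noncomputable def laurentPowKer (P : K[X]) : Submodule K⸨X⸩ (ℕ → K⸨X⸩) where
  carrier := {y | (∃ a : ℤ, ∀ n, OrderGE (y n) a) ∧ ∀ i, (fun n => (y n).coeff i) ∈ powKer P}
  zero_mem' := ⟨⟨0, fun _ => orderGE_zero _⟩, fun _ => zero_mem _⟩
  add_mem' := by
    rintro y z ⟨⟨a, ha⟩, hy⟩ ⟨⟨b, hb⟩, hz⟩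
    refine ⟨⟨min a b, fun n => ?_⟩, fun i => add_mem (hy i) (hz i)⟩
    exact ((ha n).mono (by simp)).add ((hb n).mono (by simp))
  smul_mem' := by
    rintro c y ⟨⟨a, ha⟩, hy⟩
    have hbound : ∀ n, OrderGE (c * y n) (c.order + a : ℤ) := fun n => by
      exact_mod_cast (orderGE_order c).mul (ha n)
    refine ⟨⟨_, hbound⟩, fun i => ?_⟩
    simp only [Pi.smul_apply, smul_eq_mul]
    by_cases hi : (i : ℚ) < (c.order + a : ℤ)
    · simp only [hbound _ i hi]
      exact zero_mem (powKer P)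
    · obtain ⟨m, rfl⟩ := exists_eq_add_natCast_of_not_lt hi
      simp only [coeff_mul_add_natCast (orderGE_order c) (ha _)]
      convert! sum_mem (t := Finset.range (m + 1)) fun l _ =>
        (powKer P).smul_mem (c.coeff (c.order + l)) (hy (a + (m - l : ℕ))) using 1
      funext n
      simp

lemma comp_add_mem_laurentPowKer {y : ℕ → K⸨X⸩} (hy : y ∈ laurentPowKer P) (k : ℕ) :
    (fun n => y (n + k)) ∈ laurentPowKer P := by
  obtain ⟨⟨a, ha⟩, hcoeff⟩ := hy
  exact ⟨⟨a, fun n => ha (n + k)⟩, fun i => comp_add_mem_powKer k (hcoeff i)⟩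

lemma ofCoeffs_mem_laurentPowKer {u : ℕ → ℕ → K} (hu : ∀ ν, u ν ∈ powKer P) (a : ℤ) :
    (fun n => ofCoeffs a (fun ν => u ν n)) ∈ laurentPowKer P := by
  refine ⟨⟨a, fun n => orderGE_ofCoeffs a _⟩, fun i => ?_⟩
  by_cases hi : (i : ℚ) < a
  · simp only [orderGE_ofCoeffs a _ i hi]
    exact zero_mem (powKer P)
  · obtain ⟨ν, rfl⟩ := exists_eq_add_natCast_of_not_lt hi
    simpa only [coeff_ofCoeffs] using hu ν

lemma asympOrderGE_of_mem_laurentPowKer {y : ℕ → K⸨X⸩} (hy : y ∈ laurentPowKer P) :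
    AsympOrderGE y 0 := by
  obtain ⟨a, ha⟩ := hy.1
  exact ⟨-a, .of_forall fun n => (ha n).mono (by simp)⟩

/-- The lowest coefficient that does not vanish identically on the residue class eventually never
vanishes there, by the dichotomy `hM`. -/
lemma eq_zero_or_eventually_hasOrder_of_mem_laurentPowKer {M r : ℕ}
    (hM : ∀ u ∈ powKer P, (∀ n, u (M * n + r) = 0) ∨ ∀ᶠ n in atTop, u (M * n + r) ≠ 0)
    {y : ℕ → K⸨X⸩} (hy : y ∈ laurentPowKer P) :
    (∀ n, y (M * n + r) = 0) ∨ ∃ i : ℤ, ∀ᶠ n in atTop, HasOrder (y (M * n + r)) i := by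
  classical
  obtain ⟨⟨a, ha⟩, hcoeff⟩ := hy
  by_cases hzero : ∀ ν : ℕ, ∀ n, (y (M * n + r)).coeff (a + ν) = 0
  · refine Or.inl fun n => HahnSeries.ext (funext fun i => ?_)
    by_cases hi : (i : ℚ) < a
    · exact ha _ i hi
    · obtain ⟨ν, rfl⟩ := exists_eq_add_natCast_of_not_lt hi
      exact hzero ν n
  · push Not at hzero
    obtain ⟨n₁, hn₁⟩ := Nat.find_spec hzero
    refine Or.inr ⟨a + Nat.find hzero, ?_⟩
    filter_upwards [(hM _ (hcoeff _)).resolve_left fun h => hn₁ (h n₁)] with n hn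
    refine hasOrder_iff.2 ⟨hn, fun i hi => ?_⟩
    by_cases hia : (i : ℚ) < a
    · exact ha _ i hia
    · obtain ⟨ν, rfl⟩ := exists_eq_add_natCast_of_not_lt hia
      have hlt : ν < Nat.find hzero := by
        have : a + (ν : ℤ) < a + (Nat.find hzero : ℕ) := by exact_mod_cast hi
        omega
      simpa using not_exists.1 (Nat.find_min hzero hlt) n

/-- The sequence `n ↦ t ^ n`. -/
noncomputable def tPow : ℕ → K⸨X⸩ := fun n => t ^ n

/-- Polynomials in `tPow` with coefficients in `laurentPowKer P`. -/
noncomputable def tPowSpan (P : K[X]) : Submodule K⸨X⸩ (ℕ → K⸨X⸩) :=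
  ⨆ j : ℕ, (laurentPowKer P).map (LinearMap.mulLeft K⸨X⸩ (tPow ^ j))

lemma tPow_pow_mul_mem_tPowSpan (j : ℕ) {y : ℕ → K⸨X⸩} (hy : y ∈ laurentPowKer P) :
    tPow ^ j * y ∈ tPowSpan P :=
  Submodule.mem_iSup_of_mem j (Submodule.mem_map_of_mem hy)

lemma eval_tPow_mul_mem_tPowSpan (q : K⸨X⸩[X]) {y : ℕ → K⸨X⸩} (hy : y ∈ laurentPowKer P) :
    (fun n => q.eval (t ^ n) * y n) ∈ tPowSpan P := by
  convert! sum_mem (t := Finset.range (q.natDegree + 1)) fun j _ =>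
    (tPowSpan P).smul_mem (q.coeff j) (tPow_pow_mul_mem_tPowSpan j hy) using 1
  funext n
  simp [eval_eq_sum_range, Finset.sum_mul, tPow, mul_assoc]

lemma exists_eq_add_tPow_mul {g : ℕ → K⸨X⸩} (hg : g ∈ tPowSpan P) :
    ∃ y ∈ laurentPowKer P, ∃ g' ∈ tPowSpan P, g = y + tPow * g' := by
  refine Submodule.iSup_induction _
    (motive := fun g => ∃ y ∈ laurentPowKer P, ∃ g' ∈ tPowSpan P, g = y + tPow * g') hg ?_ ?_ ?_
  · rintro (_ | j) _ ⟨y, hy, rfl⟩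
    · exact ⟨y, hy, 0, zero_mem _, by simp⟩
    · exact ⟨0, zero_mem _, _, tPow_pow_mul_mem_tPowSpan j hy, by simp [pow_succ']⟩
  · exact ⟨0, zero_mem _, 0, zero_mem _, by simp⟩
  · rintro _ _ ⟨y, hy, g, hg, rfl⟩ ⟨z, hz, h, hh, rfl⟩
    exact ⟨y + z, add_mem hy hz, g + h, add_mem hg hh, by ring⟩

lemma asympOrderGE_of_mem_tPowSpan {g : ℕ → K⸨X⸩} (hg : g ∈ tPowSpan P) : AsympOrderGE g 0 := by
  refine Submodule.iSup_induction _ (motive := fun g => AsympOrderGE g 0) hg ?_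
    (asympOrderGE_zero 0) fun _ _ => AsympOrderGE.add
  rintro j _ ⟨y, hy, rfl⟩
  convert! (asympOrderGE_eval_t_pow (X ^ j)).mul (asympOrderGE_of_mem_laurentPowKer hy) using 1
  · funext n
    simp [tPow]
  · exact (add_zero 0).symm

end LaurentPowKer

/-! ### Recurrences with constant Laurent coefficients -/

section ConstantCoefficients

variable {K : Type*} [Field K] {e : ℕ} {c : ℕ → K⸨X⸩} {μ a : ℤ}

/-- The coefficient of `t ^ i` in `∑ k ≤ e, c k * X ^ k`. -/
noncomputable def coeffPoly (e : ℕ) (c : ℕ → K⸨X⸩) (i : ℤ) : K[X] :=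
  ∑ k ∈ Finset.range (e + 1), C ((c k).coeff i) * X ^ k

lemma natDegree_coeffPoly_le (i : ℤ) : (coeffPoly e c i).natDegree ≤ e :=
  natDegree_sum_le_of_forall_le _ _ fun k hk =>
    (natDegree_C_mul_X_pow_le _ k).trans (Finset.mem_range_succ_iff.1 hk)

lemma aeval_shift_coeffPoly (i : ℤ) (u : ℕ → K) (n : ℕ) : aeval (shift K) (coeffPoly e c i) u n =
    ∑ k ∈ Finset.range (e + 1), (c k).coeff i * u (n + k) := by
  simp [coeffPoly, shift_pow_apply]

lemma coeff_sum_mul_eq_cauchyConv (hc : ∀ k ≤ e, OrderGE (c k) μ) {y : ℕ → K⸨X⸩} {n : ℕ}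
    (hy : ∀ m ≥ n, OrderGE (y m) a) (ν : ℕ) :
    (∑ k ∈ Finset.range (e + 1), c k * y (n + k)).coeff (μ + a + ν) =
      cauchyConv (fun l => coeffPoly e c (μ + l)) (fun ν n => (y n).coeff (a + ν)) ν n := by
  simp only [cauchyConv, HahnSeries.coeff_sum, Finset.sum_apply, aeval_shift_coeffPoly]
  rw [Finset.sum_comm]
  refine Finset.sum_congr rfl fun k hk => ?_
  rw [coeff_mul_add_natCast (hc k (Finset.mem_range_succ_iff.1 hk)) (hy _ (Nat.le_add_right n k))]

lemma eq_of_coeff_add_natCast_eq {x y : K⸨X⸩} (hx : OrderGE x a) (hy : OrderGE y a)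
    (h : ∀ ν : ℕ, x.coeff (a + ν) = y.coeff (a + ν)) : x = y := by
  rw [← hx.ofCoeffs_eq, ← hy.ofCoeffs_eq, funext h]

lemma orderGE_of_coeff_add_natCast {x : K⸨X⸩} {d : ℚ} (hx : OrderGE x a)
    (h : ∀ ν : ℕ, (a + ν : ℚ) < d → x.coeff (a + ν) = 0) : OrderGE x d := by
  intro i hi
  by_cases hia : (i : ℚ) < a
  · exact hx i hia
  · obtain ⟨ν, rfl⟩ := exists_eq_add_natCast_of_not_lt hia
    exact h ν (by exact_mod_cast hi)

/-- An approximate solution of a recurrence with constant coefficients is close to an exact one with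
coefficients in `powKer P`; the exact solution is found coefficient by coefficient. -/
lemma exists_mem_laurentPowKer_approx {P : K[X]} {m : ℕ} (hP : P.coeff 0 ≠ 0)
    (hc : ∀ k ≤ e, OrderGE (c k) μ) (hμ : coeffPoly e c μ ≠ 0) (hdvd : coeffPoly e c μ ∣ X ^ m * P)
    {h γ err : ℕ → K⸨X⸩} (hh : AsympOrderGE h 0) (hγ : γ ∈ laurentPowKer P)
    (herr : AsympOrderGE err (fun n => n))
    (heq : ∀ᶠ n in atTop, ∑ k ∈ Finset.range (e + 1), c k * h (n + k) = γ n + err n) :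
    ∃ y ∈ laurentPowKer P, (∀ n, ∑ k ∈ Finset.range (e + 1), c k * y (n + k) = γ n) ∧
      AsympOrderGE (fun n => h n - y n) (fun n => n / (e + 2)) := by
  obtain ⟨A, hA⟩ := hh
  obtain ⟨B, hB⟩ := herr
  obtain ⟨⟨b, hb⟩, hγP⟩ := hγ
  obtain ⟨a, haA⟩ := exists_int_lt (min (-A) (b - μ))
  obtain ⟨haA, hab⟩ := lt_min_iff.1 haA
  obtain ⟨n₀, hn₀⟩ := eventually_atTop.1 (hA.and (hB.and (heq.and
    (tendsto_natCast_atTop_atTop.eventually_ge_atTop (μ + a + B + 1)))))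
  choose hA hB heq hlarge using hn₀
  have hha : ∀ n ≥ n₀, OrderGE (h n) a := fun n hn =>
    (hA n hn).mono (by simpa using haA.le)
  have hγa : ∀ n, OrderGE (γ n) (μ + a : ℤ) := fun n =>
    (hb n).mono (by push_cast; linarith)
  obtain ⟨u, huP, hu, hhu⟩ := exists_cauchyConv_eq hP (Ξ := fun l => coeffPoly e c (μ + l))
    (v := fun ν n => (h n).coeff (a + ν)) (γ := fun ν n => (γ n).coeff (μ + a + ν)) (n₀ := n₀)
    (fun l => natDegree_coeffPoly_le _) (by simpa using hμ) (by simpa using hdvd)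
    (fun ν => hγP _) fun ν n hn => by
      have hn' : (n₀ + ν : ℚ) ≤ n := by exact_mod_cast hn
      have herr : (err n).coeff (μ + a + ν) = 0 := hB n (by omega) _ (by
        push_cast; linarith [hlarge n₀ le_rfl])
      rw [← coeff_sum_mul_eq_cauchyConv hc (fun k hk => hha k (by omega)), heq n (by omega),
        HahnSeries.coeff_add, herr, add_zero]
  have hy : ∀ n, OrderGE (ofCoeffs a fun ν => u ν n) a := fun n => orderGE_ofCoeffs a _
  refine ⟨fun n => ofCoeffs a fun ν => u ν n, ofCoeffs_mem_laurentPowKer huP a, fun n => ?_, ?_⟩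
  · refine eq_of_coeff_add_natCast_eq (OrderGE.sum fun k hk => ?_) (hγa n) fun ν => ?_
    · exact_mod_cast (hc k (Finset.mem_range_succ_iff.1 hk)).mul (hy (n + k))
    · rw [coeff_sum_mul_eq_cauchyConv hc fun m _ => hy m]
      simpa only [coeff_ofCoeffs] using congrFun (hu ν) n
  · refine ⟨n₀ + e - a, eventually_atTop.2 ⟨n₀, fun n hn => ?_⟩⟩
    refine orderGE_of_coeff_add_natCast ((hha n hn).sub (hy n)) fun ν hν => ?_
    have he : (0 : ℚ) < e + 2 := by positivity
    have hν : (n₀ + e + ν) * (e + 2) < n := by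
      have : (n₀ + e + ν : ℚ) < n / (e + 2) := by linarith
      exact_mod_cast (lt_div_iff₀ he).1 this
    rw [HahnSeries.coeff_sub, coeff_ofCoeffs, sub_eq_zero]
    exact hhu ν n (by nlinarith)

end ConstantCoefficients

/-! ### Normalized recurrences -/

section Evaluation

variable {K : Type*} [Field K]

lemma eval_eq_coeff_zero_add_mul (p : K⸨X⸩[X]) (x : K⸨X⸩) :
    p.eval x = p.coeff 0 + x * p.divX.eval x := by
  have h := congrArg (eval x) (X_mul_divX_add p)
  rw [eval_add, eval_mul, eval_X, eval_C] at h
  rw [← h, add_comm]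

lemma asympOrderGE_t_pow_mul_eval (p : K⸨X⸩[X]) :
    AsympOrderGE (fun n => t ^ n * p.eval (t ^ n)) (fun n => n) :=
  (asympOrderGE_t_pow.mul (asympOrderGE_eval_t_pow p)).mono_add 0 (by simp)

lemma eventually_hasOrder_eval_t_pow {p : K⸨X⸩[X]} (hp : p.coeff 0 ≠ 0) :
    ∀ᶠ n in atTop, HasOrder (p.eval (t ^ n)) (p.coeff 0).order := by
  obtain ⟨C, hC⟩ := asympOrderGE_t_pow_mul_eval p.divX
  filter_upwards [hC, tendsto_natCast_atTop_atTop.eventually_gt_atTop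
    ((p.coeff 0).order + C)] with n hn hlarge
  rw [eval_eq_coeff_zero_add_mul]
  exact HasOrder.add_orderGE ⟨hp, rfl⟩ hn (by linarith)

lemma asympOrderGE_eval_t_pow_of_coeff_zero {p : K⸨X⸩[X]} (hp : p.coeff 0 = 0) :
    AsympOrderGE (fun n => p.eval (t ^ n)) (fun n => n) := by
  simpa only [eval_eq_coeff_zero_add_mul p, hp, zero_add] using asympOrderGE_t_pow_mul_eval p.divX

end Evaluation

section Normalized

variable {K : Type*} [Field K] {lc : ℕ → K} {e : ℕ} {P : K[X]} {p : ℕ → K⸨X⸩[X]}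

/-- A polynomial with nonzero constant term which, up to powers of `X`, is a multiple of every
nonzero partial sum of `∑ k ≤ e, lc k * X ^ k`. These partial sums are the possible leading
polynomials of a recurrence whose coefficients have leading coefficients `lc k`. -/
def IsCharMultiple (lc : ℕ → K) (e : ℕ) (P : K[X]) : Prop :=
  P.coeff 0 ≠ 0 ∧ ∃ m : ℕ, ∀ S ⊆ Finset.range (e + 1),
    ∑ k ∈ S, C (lc k) * X ^ k ≠ 0 → ∑ k ∈ S, C (lc k) * X ^ k ∣ X ^ m * P

lemma exists_isCharMultiple (lc : ℕ → K) (e : ℕ) : ∃ P, IsCharMultiple lc e P := by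
  classical
  let Q := ∏ S ∈ (Finset.range (e + 1)).powerset with ∑ k ∈ S, C (lc k) * X ^ k ≠ 0,
    ∑ k ∈ S, C (lc k) * X ^ k
  have hQ : Q ≠ 0 := Finset.prod_ne_zero_iff.2 fun S hS => (Finset.mem_filter.1 hS).2
  obtain ⟨P, hP, hXP⟩ := exists_eq_pow_rootMultiplicity_mul_and_not_dvd Q hQ 0
  rw [C_0, sub_zero] at hP hXP
  refine ⟨P, fun h => hXP (X_dvd_iff.2 h), rootMultiplicity 0 Q, fun S hS hne => ?_⟩
  rw [← hP]
  exact Finset.dvd_prod_of_mem (fun S => ∑ k ∈ S, C (lc k) * X ^ k)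
    (Finset.mem_filter.2 ⟨Finset.mem_powerset.2 hS, hne⟩)

/-- A recurrence operator `∑ k ≤ e, p k (t ^ n) E ^ k` whose constant coefficients `(p k).coeff 0`
do not all vanish, have orders with integral divided differences, and have leading coefficients
`lc k`. -/
structure Normalized (lc : ℕ → K) (e : ℕ) (p : ℕ → K⸨X⸩[X]) : Prop where
  exists_coeff_ne_zero : ∃ k ≤ e, (p k).coeff 0 ≠ 0
  sub_dvd_order_sub : ∀ k ≤ e, ∀ l ≤ e, (p k).coeff 0 ≠ 0 → (p l).coeff 0 ≠ 0 →
    (k : ℤ) - l ∣ ((p k).coeff 0).order - ((p l).coeff 0).order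
  leadingCoeff_eq : ∀ k ≤ e, (p k).coeff 0 ≠ 0 → ((p k).coeff 0).leadingCoeff = lc k

lemma leadingCoeff_t_zpow_mul (a : ℤ) (x : K⸨X⸩) : (t ^ a * x).leadingCoeff = x.leadingCoeff := by
  rw [HahnSeries.leadingCoeff_mul, t_zpow, HahnSeries.leadingCoeff_of_single, one_mul]

lemma order_t_zpow_mul (a : ℤ) {x : K⸨X⸩} (hx : x ≠ 0) : (t ^ a * x).order = a + x.order :=
  ((hasOrder_t_zpow a).mul ⟨hx, rfl⟩).2

/-- Multiplying the unknown sequence by `t ^ (- w * n)` multiplies the `k`-th coefficient of a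
recurrence by `t ^ (w * k)`. -/
lemma Normalized.twist (hp : Normalized lc e p) (w : ℤ) :
    Normalized lc e (fun k => C (t ^ (w * k)) * p k) := by
  have hne : ∀ k : ℕ, (C (t ^ (w * k)) * p k).coeff 0 ≠ 0 ↔ (p k).coeff 0 ≠ 0 := fun k => by
    simp [zpow_ne_zero _ t_ne_zero]
  obtain ⟨k₀, hk₀, hne₀⟩ := hp.exists_coeff_ne_zero
  refine ⟨⟨k₀, hk₀, (hne k₀).2 hne₀⟩, fun k hk l hl hkne hlne => ?_, fun k hk hkne => ?_⟩
  · rw [hne] at hkne hlne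
    rw [coeff_C_mul, coeff_C_mul, order_t_zpow_mul _ hkne, order_t_zpow_mul _ hlne,
      add_sub_add_comm, ← mul_sub]
    exact dvd_add (Dvd.intro_left w rfl) (hp.sub_dvd_order_sub k hk l hl hkne hlne)
  · rw [coeff_C_mul, leadingCoeff_t_zpow_mul, hp.leadingCoeff_eq k hk ((hne k).1 hkne)]

lemma Normalized.exists_dvd_coeffPoly (hp : Normalized lc e p) (hP : IsCharMultiple lc e P) :
    ∃ μ : ℤ, (∀ k ≤ e, OrderGE ((p k).coeff 0) μ) ∧ coeffPoly e (fun k => (p k).coeff 0) μ ≠ 0 ∧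
      ∃ m, coeffPoly e (fun k => (p k).coeff 0) μ ∣ X ^ m * P := by
  classical
  obtain ⟨k₀, hk₀, hne₀⟩ := hp.exists_coeff_ne_zero
  obtain ⟨k₁, hk₁, hmin⟩ := Finset.exists_min_image
    {k ∈ Finset.range (e + 1) | (p k).coeff 0 ≠ 0} (fun k => ((p k).coeff 0).order)
    ⟨k₀, by simpa using ⟨hk₀, hne₀⟩⟩
  simp only [Finset.mem_filter, Finset.mem_range_succ_iff, and_imp] at hk₁ hmin
  set μ := ((p k₁).coeff 0).order
  have hμ : ∀ k ≤ e, OrderGE ((p k).coeff 0) μ := fun k hk => by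
    by_cases hne : (p k).coeff 0 = 0
    · exact hne ▸ orderGE_zero _
    · exact orderGE_iff.2 (Or.inr (by exact_mod_cast hmin k hk hne))
  have hcoeff : ∀ k ≤ e, ((p k).coeff 0).coeff μ ≠ 0 → ((p k).coeff 0).coeff μ = lc k := by
    intro k hk hne
    obtain ⟨hne0, hord⟩ : HasOrder ((p k).coeff 0) μ := hasOrder_iff.2 ⟨hne, hμ k hk⟩
    rw [← hp.leadingCoeff_eq k hk hne0, HahnSeries.leadingCoeff_eq, hord]
  have hsum : coeffPoly e (fun k => (p k).coeff 0) μ =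
      ∑ k ∈ Finset.range (e + 1) with ((p k).coeff 0).coeff μ ≠ 0, C (lc k) * X ^ k := by
    rw [coeffPoly, Finset.sum_filter]
    refine Finset.sum_congr rfl fun k hk => ?_
    split_ifs with hne
    · rw [hcoeff k (Finset.mem_range_succ_iff.1 hk) hne]
    · rw [not_not.1 hne, C_0, zero_mul]
  have hne : coeffPoly e (fun k => (p k).coeff 0) μ ≠ 0 := fun h => by
    have hzero := congrArg (coeff · k₁) h
    simp only [coeffPoly, finsetSum_coeff, coeff_C_mul_X_pow, coeff_zero, Finset.sum_ite_eq,
      Finset.mem_range_succ_iff, if_pos hk₁.1] at hzero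
    exact HahnSeries.coeff_order_eq_zero.not.2 hk₁.2 hzero
  refine ⟨μ, hμ, hne, ?_⟩
  obtain ⟨m, hm⟩ := hP.2
  exact ⟨m, hsum ▸ hm _ (Finset.filter_subset _ _) (hsum ▸ hne)⟩

lemma sub_mul_add_min_le {κ : ℚ} (hκ₀ : 0 < κ) (hκ₁ : κ < 1) {a b k l : ℤ}
    (hkl : k ≠ l) (h₁ : a ≤ b) (h₂ : a - k ≤ b - l) :
    a - κ * k + min κ (1 - κ) ≤ b - κ * l := by
  rcases h₁.lt_or_eq with h | rfl
  · have h₁' : (a : ℚ) + 1 ≤ b := by exact_mod_cast h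
    have h₂' : (a : ℚ) - k ≤ b - l := by exact_mod_cast h₂
    nlinarith [min_le_right κ (1 - κ)]
  · have h₂' : (l : ℚ) + 1 ≤ k := by exact_mod_cast (show l + 1 ≤ k by omega)
    nlinarith [min_le_left κ (1 - κ)]

/-- Boundedness below is recovered from a lower bound of slope in `(-1, 0)`: the term `ks`
minimizing the order of the coefficients, with ties broken towards slope `-1`, is strictly dominant
for all slopes in between. -/
lemma Normalized.asympOrderGE_zero_of_slope (hp : Normalized lc e p) {h g : ℕ → K⸨X⸩}
    (hrec : ∀ᶠ n in atTop, ∑ k ∈ Finset.range (e + 1), (p k).eval (t ^ n) * h (n + k) = g n)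
    (hg : AsympOrderGE g 0) {κ : ℚ} (hκ₀ : 0 < κ) (hκ₁ : κ < 1)
    (hh : AsympOrderGE h (fun n => -κ * n)) : AsympOrderGE h 0 := by
  classical
  obtain ⟨k₀, hk₀, hne₀⟩ := hp.exists_coeff_ne_zero
  obtain ⟨ks, hks, hmin⟩ := exists_min_and_min_add
    {k ∈ Finset.range (e + 1) | (p k).coeff 0 ≠ 0} ⟨k₀, by simpa using ⟨hk₀, hne₀⟩⟩
    (fun k => ((p k).coeff 0).order - k) fun k hk l hl => by
      simp only [Finset.mem_filter, Finset.mem_range_succ_iff] at hk hl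
      rw [sub_sub_sub_comm]
      exact dvd_sub (hp.sub_dvd_order_sub k hk.1 l hl.1 hk.2 hl.2) dvd_rfl
  simp only [Finset.mem_filter, Finset.mem_range_succ_iff, and_imp, sub_add_cancel] at hks hmin
  refine asympOrderGE_of_dominant (ks := ks) (lt_min hκ₀ (sub_pos.2 hκ₁)) hks.1 hrec
    (eventually_hasOrder_eval_t_pow hks.2) (fun k hk hne => ?_)
    (hg.mono_add ((p ks).coeff 0).order (by simp)) hh
  by_cases hzero : (p k).coeff 0 = 0
  · obtain ⟨C, hC⟩ := asympOrderGE_eval_t_pow_of_coeff_zero hzero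
    refine ⟨fun n => n - C, ?_⟩
    filter_upwards [hC, tendsto_natCast_atTop_atTop.eventually_ge_atTop
      (((p ks).coeff 0).order + C + κ * k + κ)] with n hn hlarge
    refine ⟨hn, ?_, ?_⟩
    · have := min_le_left κ (1 - κ)
      have : 0 ≤ κ * ks := by positivity
      push_cast
      linarith
    · have : 0 ≤ κ * k := by positivity
      simp only [Pi.zero_apply]
      linarith
  · refine ⟨fun _ => ((p k).coeff 0).order, ?_⟩
    filter_upwards [eventually_hasOrder_eval_t_pow hzero] with n hn
    obtain ⟨hle_sub, hle⟩ := hmin k hk hzero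
    refine ⟨hn.orderGE, ?_, ?_⟩
    · have := sub_mul_add_min_le hκ₀ hκ₁ (k := ks) (l := k) (by exact_mod_cast hne.symm) hle
        hle_sub
      push_cast at this ⊢
      linarith
    · simpa using hle

end Normalized

/-! ### Expansion in powers of `t ^ n` -/

section Expansion

variable {K : Type*} [Field K] {lc : ℕ → K} {e : ℕ} {P : K[X]} {p : ℕ → K⸨X⸩[X]}
  {h g : ℕ → K⸨X⸩}

lemma sum_eval_mul_eq (p : ℕ → K⸨X⸩[X]) (h : ℕ → K⸨X⸩) (n : ℕ) :
    ∑ k ∈ Finset.range (e + 1), (p k).eval (t ^ n) * h (n + k) =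
      ∑ k ∈ Finset.range (e + 1), (p k).coeff 0 * h (n + k) +
        t ^ n * ∑ k ∈ Finset.range (e + 1), (p k).divX.eval (t ^ n) * h (n + k) := by
  rw [Finset.mul_sum, ← Finset.sum_add_distrib]
  refine Finset.sum_congr rfl fun k _ => ?_
  rw [eval_eq_coeff_zero_add_mul, add_mul, mul_assoc]

lemma sum_eval_twist_mul_eq {y γ g₁ : ℕ → K⸨X⸩} {n : ℕ}
    (hrec : ∑ k ∈ Finset.range (e + 1), (p k).eval (t ^ n) * h (n + k) = γ n + t ^ n * g₁ n)
    (hy : ∑ k ∈ Finset.range (e + 1), (p k).coeff 0 * y (n + k) = γ n) :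
    ∑ k ∈ Finset.range (e + 1), (C (t ^ ((1 : ℤ) * k)) * p k).eval (t ^ n) *
        ((t ^ (n + k))⁻¹ * (h (n + k) - y (n + k))) =
      g₁ n - ∑ k ∈ Finset.range (e + 1), (p k).divX.eval (t ^ n) * y (n + k) := by
  have ht : (t : K⸨X⸩) ≠ 0 := t_ne_zero
  refine mul_left_cancel₀ (pow_ne_zero n ht) ?_
  calc
    _ = ∑ k ∈ Finset.range (e + 1), (p k).eval (t ^ n) * (h (n + k) - y (n + k)) := by
      rw [Finset.mul_sum]
      refine Finset.sum_congr rfl fun k _ => ?_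
      rw [one_mul, zpow_natCast, eval_mul, eval_C]
      field_simp
      ring
    _ = _ := by
      simp only [mul_sub, Finset.sum_sub_distrib]
      rw [hrec, sum_eval_mul_eq p y, hy]
      ring

/-- The part of `h` of order zero in `t ^ n` solves a recurrence with constant coefficients, so it
can be split off, and the remainder solves a recurrence of the same shape. -/
lemma Normalized.exists_eq_add_t_pow_mul (hp : Normalized lc e p) (hP : IsCharMultiple lc e P)
    (hrec : ∀ᶠ n in atTop, ∑ k ∈ Finset.range (e + 1), (p k).eval (t ^ n) * h (n + k) = g n)
    (hg : g ∈ tPowSpan P) (hh : AsympOrderGE h 0) :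
    ∃ y ∈ laurentPowKer P, ∃ h' : ℕ → K⸨X⸩, (∀ n, h n = y n + t ^ n * h' n) ∧
      AsympOrderGE h' 0 ∧ ∃ g' ∈ tPowSpan P, ∀ᶠ n in atTop,
        ∑ k ∈ Finset.range (e + 1), (C (t ^ ((1 : ℤ) * k)) * p k).eval (t ^ n) * h' (n + k) =
          g' n := by
  obtain ⟨μ, hμ, hne, m, hdvd⟩ := hp.exists_dvd_coeffPoly hP
  obtain ⟨γ, hγ, g₁, hg₁, rfl⟩ := exists_eq_add_tPow_mul hg
  have herr : AsympOrderGE (fun n => t ^ n * (g₁ n -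
      ∑ k ∈ Finset.range (e + 1), (p k).divX.eval (t ^ n) * h (n + k))) (fun n => n) := by
    refine (asympOrderGE_t_pow.mul ((asympOrderGE_of_mem_tPowSpan hg₁).sub
      (AsympOrderGE.sum fun k _ => ?_))).mono_add 0 (by simp)
    exact ((asympOrderGE_eval_t_pow _).mul (hh.comp_tendsto (tendsto_add_atTop_nat k))).mono_add 0
      (by simp)
  obtain ⟨y, hy, hyrec, hhy⟩ := exists_mem_laurentPowKer_approx hP.1 hμ hne hdvd hh hγ herr
    <| by
      filter_upwards [hrec] with n hn
      rw [sum_eval_mul_eq, Pi.add_apply, Pi.mul_apply, tPow] at hn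
      rw [mul_sub, ← add_sub_assoc, ← hn, add_sub_cancel_right]
  have hrec' := hrec.mono fun n hn => sum_eval_twist_mul_eq hn (hyrec n)
  have hg' : (fun n => g₁ n - ∑ k ∈ Finset.range (e + 1), (p k).divX.eval (t ^ n) * y (n + k)) ∈
      tPowSpan P := by
    refine sub_mem hg₁ ?_
    simpa only [Finset.sum_fn] using sum_mem fun k _ =>
      eval_tPow_mul_mem_tPowSpan (p k).divX (comp_add_mem_laurentPowKer hy k)
  refine ⟨y, hy, fun n => (t ^ n)⁻¹ * (h n - y n), fun n => ?_, ?_, _, hg', hrec'⟩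
  · rw [mul_inv_cancel_left₀ (pow_ne_zero n t_ne_zero), add_sub_cancel]
  · have hκ : (1 : ℚ) / (e + 2) < 1 := by
      rw [div_lt_one (by positivity)]
      linarith [(Nat.cast_nonneg e : (0 : ℚ) ≤ e)]
    refine (hp.twist 1).asympOrderGE_zero_of_slope hrec' (asympOrderGE_of_mem_tPowSpan hg')
      (κ := 1 - 1 / (e + 2)) (sub_pos.2 hκ) (sub_lt_self _ (by positivity)) ?_
    refine (AsympOrderGE.mul (φ := fun n => -n) ⟨0, .of_forall fun n => ?_⟩ hhy).mono_add 0
      (.of_forall fun n => le_of_eq (by ring))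
    rw [← zpow_natCast, ← zpow_neg]
    exact (hasOrder_t_zpow _).orderGE.mono (by simp)

/-- Along each residue class, the terms of the expansion of `h` in powers of `t ^ n` vanish or have
eventually constant order, so either the first nonzero term determines the order of `h`, or the
order grows faster than `J * n`. -/
theorem Normalized.hasOrder_or_orderGE {M r : ℕ} (hM₀ : 0 < M)
    (hM : ∀ u ∈ powKer P, (∀ n, u (M * n + r) = 0) ∨ ∀ᶠ n in atTop, u (M * n + r) ≠ 0)
    (hP : IsCharMultiple lc e P) (J : ℕ) (hp : Normalized lc e p)
    (hrec : ∀ᶠ n in atTop, ∑ k ∈ Finset.range (e + 1), (p k).eval (t ^ n) * h (n + k) = g n)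
    (hg : g ∈ tPowSpan P) (hh : AsympOrderGE h 0) :
    (∃ j i : ℤ, ∀ᶠ n in atTop, HasOrder (h (M * n + r)) (j * (M * n + r : ℕ) + i)) ∨
      AsympOrderGE (fun n => h (M * n + r)) (fun n => J * (M * n + r : ℕ)) := by
  have hM_tendsto := tendsto_mul_add_atTop hM₀ r
  induction J generalizing p h g with
  | zero => exact Or.inr ((hh.comp_tendsto hM_tendsto).mono_add 0 (by simp))
  | succ J ih =>
    obtain ⟨y, hy, h', hyh', hh', g', hg', hrec'⟩ := hp.exists_eq_add_t_pow_mul hP hrec hg hh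
    obtain hzero | ⟨i, hi⟩ := eq_zero_or_eventually_hasOrder_of_mem_laurentPowKer hM hy
    · have hclass : ∀ n, h (M * n + r) = t ^ (M * n + r) * h' (M * n + r) := fun n => by
        rw [hyh', hzero, zero_add]
      simp only [hclass]
      obtain ⟨j, i, hji⟩ | hJ := ih (hp.twist 1) hrec' hg' hh'
      · refine Or.inl ⟨j + 1, i, ?_⟩
        filter_upwards [hji] with n hn
        convert (hasOrder_t_pow (M * n + r)).mul hn using 1
        ring
      · refine Or.inr (((asympOrderGE_t_pow.comp_tendsto hM_tendsto).mul hJ).mono_add 0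
          (.of_forall fun n => le_of_eq ?_))
        push_cast
        ring
    · refine Or.inl ⟨0, i, ?_⟩
      obtain ⟨C, hC⟩ := (asympOrderGE_t_pow.mul hh').comp_tendsto hM_tendsto
      filter_upwards [hi, hC, (tendsto_natCast_atTop_atTop.comp hM_tendsto).eventually_gt_atTop
        (i + C)] with n hn hCn hlarge
      rw [hyh', zero_mul, zero_add]
      exact hn.add_orderGE hCn (by simpa using lt_sub_iff_add_lt.2 hlarge)

end Expansion

/-! ### Quadratic growth of orders -/

section QuadraticGrowth

variable {K : Type*} [Field K] {lc : ℕ → K} {e : ℕ} {A : ℕ → ℤ} {p : ℕ → K⸨X⸩[X]}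
  {h : ℕ → K⸨X⸩}

/-- The recurrence `∑ k ≤ e, t ^ (2 * A k * n) * p k (t ^ n) * h (n + k) = 0`. With the factor `2`,
the substitution `h n = t ^ (s * n ^ 2) * h' n` changes `A k` to `A k + s * k`. -/
def IsSolution (e : ℕ) (A : ℕ → ℤ) (p : ℕ → K⸨X⸩[X]) (h : ℕ → K⸨X⸩) : Prop :=
  ∀ n : ℕ, ∑ k ∈ Finset.range (e + 1), t ^ (2 * A k * n) * (p k).eval (t ^ n) * h (n + k) = 0

/-- The class of recurrences `IsSolution e A p` to which the quadratic growth analysis applies: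
those with nonvanishing first and last coefficients, with `t ^ (2 * A k * n)` split off from the
`k`-th coefficient so that `p k` has a nonzero constant coefficient, and with integral divided
differences of `A k` and of the orders of these constant coefficients, whose leading coefficients
are `lc k`. -/
structure Admissible (lc : ℕ → K) (e : ℕ) (A : ℕ → ℤ) (p : ℕ → K⸨X⸩[X]) : Prop where
  zero_ne_zero : p 0 ≠ 0
  last_ne_zero : p e ≠ 0
  coeff_zero_ne_zero : ∀ k ≤ e, p k ≠ 0 → (p k).coeff 0 ≠ 0
  sub_dvd_sub : ∀ k ≤ e, ∀ l ≤ e, (k : ℤ) - l ∣ A k - A l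
  sub_dvd_order_sub : ∀ k ≤ e, ∀ l ≤ e, p k ≠ 0 → p l ≠ 0 →
    (k : ℤ) - l ∣ ((p k).coeff 0).order - ((p l).coeff 0).order
  leadingCoeff_eq : ∀ k ≤ e, ((p k).coeff 0).leadingCoeff = lc k

lemma Admissible.twist (hp : Admissible lc e A p) (s : ℤ) :
    Admissible lc e (fun k => A k + s * k) (fun k => C (t ^ (s * k ^ 2)) * p k) := by
  have hC : ∀ k : ℕ, C ((t : K⸨X⸩) ^ (s * k ^ 2)) ≠ 0 := fun k =>
    C_ne_zero.2 (zpow_ne_zero _ t_ne_zero)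
  have hne : ∀ {k : ℕ}, C (t ^ (s * k ^ 2)) * p k ≠ 0 → p k ≠ 0 := right_ne_zero_of_mul
  refine ⟨mul_ne_zero (hC 0) hp.zero_ne_zero, mul_ne_zero (hC e) hp.last_ne_zero,
    fun k hk hpk => ?_, fun k hk l hl => ?_, fun k hk l hl hpk hpl => ?_, fun k hk => ?_⟩
  · rw [coeff_C_mul]
    exact mul_ne_zero (zpow_ne_zero _ t_ne_zero) (hp.coeff_zero_ne_zero k hk (hne hpk))
  · rw [add_sub_add_comm, ← mul_sub]
    exact dvd_add (hp.sub_dvd_sub k hk l hl) (dvd_mul_left _ _)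
  · rw [coeff_C_mul, coeff_C_mul,
      order_t_zpow_mul _ (hp.coeff_zero_ne_zero k hk (hne hpk)),
      order_t_zpow_mul _ (hp.coeff_zero_ne_zero l hl (hne hpl)), add_sub_add_comm, ← mul_sub,
      sq_sub_sq]
    exact dvd_add (Dvd.dvd.mul_left (dvd_mul_left _ _) s)
      (hp.sub_dvd_order_sub k hk l hl (hne hpk) (hne hpl))
  · rw [coeff_C_mul, leadingCoeff_t_zpow_mul, hp.leadingCoeff_eq k hk]

lemma IsSolution.twist (hh : IsSolution e A p h) (s : ℤ) :
    IsSolution e (fun k => A k + s * k) (fun k => C (t ^ (s * k ^ 2)) * p k)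
      (fun n => t ^ (-(s * n ^ 2)) * h n) := by
  intro n
  have hterm : ∀ k : ℕ, t ^ (2 * (A k + s * k) * n) * (C (t ^ (s * k ^ 2)) * p k).eval (t ^ n) *
      (t ^ (-(s * ((n + k : ℕ) : ℤ) ^ 2)) * h (n + k)) =
      t ^ (-(s * n ^ 2)) * (t ^ (2 * A k * n) * (p k).eval (t ^ n) * h (n + k)) := fun k => by
    have ht : (t : K⸨X⸩) ^ (-(s * n ^ 2)) * t ^ (2 * A k * n) =
        t ^ (2 * (A k + s * k) * n) * t ^ (s * k ^ 2) * t ^ (-(s * ((n + k : ℕ) : ℤ) ^ 2)) := by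
      simp only [← zpow_add₀ t_ne_zero]
      congr 1
      push_cast
      ring
    rw [eval_mul, eval_C, mul_assoc (t ^ (2 * A k * n)), ← mul_assoc (t ^ (-(s * n ^ 2))), ht]
    ring
  simp only [hterm, ← Finset.mul_sum, hh n, mul_zero]

lemma Admissible.eventually_hasOrder (hp : Admissible lc e A p) {k : ℕ} (hk : k ≤ e)
    (hpk : p k ≠ 0) : ∀ᶠ n : ℕ in atTop, HasOrder (t ^ (2 * A k * n) * (p k).eval (t ^ n))
      (2 * A k * n + ((p k).coeff 0).order) := by
  filter_upwards [eventually_hasOrder_eval_t_pow (hp.coeff_zero_ne_zero k hk hpk)] with n hn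
  exact (hasOrder_t_zpow _).mul hn

lemma eventually_two_mul_add_le {a b : ℤ} (hab : a < b) (c : ℚ) :
    ∀ᶠ n : ℕ in atTop, 2 * a * n + c ≤ 2 * b * n := by
  have hab : (a : ℚ) + 1 ≤ b := by exact_mod_cast hab
  filter_upwards [tendsto_natCast_atTop_atTop.eventually_ge_atTop c] with n hn
  nlinarith [(Nat.cast_nonneg n : (0 : ℚ) ≤ n)]

lemma asympOrderGE_zero_of_last_dominant {b : ℕ → ℕ → K⸨X⸩} {Be : ℕ → ℤ}
    (hrec : ∀ᶠ n in atTop, ∑ k ∈ Finset.range (e + 1), b k n * h (n + k) = 0)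
    (hdom : ∀ᶠ n in atTop, HasOrder (b e n) (Be n))
    (hother : ∀ k < e, ∀ᶠ n in atTop, OrderGE (b k n) (Be n)) : AsympOrderGE h 0 := by
  have hother : ∀ᶠ n in atTop, ∀ k ∈ Finset.range e, OrderGE (b k n) (Be n) :=
    (eventually_all_finset _).2 fun k hk => hother k (Finset.mem_range.1 hk)
  obtain ⟨N, hN⟩ := eventually_atTop.1 (hrec.and (hdom.and hother))
  choose hrec hdom hother using hN
  obtain ⟨D, hD⟩ := ((Finset.range (N + e)).image fun n => -((h n).order : ℚ)).exists_le
  simp only [Finset.mem_image, Finset.mem_range, forall_exists_index, and_imp,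
    forall_apply_eq_imp_iff₂] at hD
  refine ⟨D, .of_forall fun n => ?_⟩
  rw [Pi.zero_apply, zero_sub]
  induction n using Nat.strong_induction_on with
  | _ n ih =>
    obtain hinit | hlarge := lt_or_ge n (N + e)
    · exact (orderGE_order (h n)).mono (neg_le.1 (hD n hinit))
    obtain ⟨n, rfl⟩ : ∃ m, n = m + e := ⟨n - e, by omega⟩
    have hn : n ≥ N := by omega
    refine (hdom n hn).orderGE_of_mul ?_
    have hlast := hrec n hn
    rw [Finset.sum_range_succ] at hlast
    rw [eq_neg_of_add_eq_zero_right hlast]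
    exact (OrderGE.sum fun k hk => (hother n hn k hk).mul (ih (n + k) (by grind))).neg

lemma Admissible.asympOrderGE_zero_of_lt (hp : Admissible lc e A p) (hh : IsSolution e A p h)
    (hA : ∀ k < e, A e < A k) : AsympOrderGE h 0 := by
  refine asympOrderGE_zero_of_last_dominant (.of_forall hh)
    (hp.eventually_hasOrder le_rfl hp.last_ne_zero) fun k hk => ?_
  by_cases hpk : p k = 0
  · simp [hpk, orderGE_zero]
  · filter_upwards [hp.eventually_hasOrder hk.le hpk, eventually_two_mul_add_le (hA k hk)
      (((p e).coeff 0).order - ((p k).coeff 0).order)] with n hn hle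
    exact hn.orderGE.mono (by push_cast; linarith)

/-- When the first term dominates, the target in `orderGE_of_dominant` can be arbitrarily large. -/
lemma Admissible.exists_eq_zero_of_lt (hp : Admissible lc e A p) (hh : IsSolution e A p h)
    (hA : ∀ k ≤ e, k ≠ 0 → A 0 < A k) {w : ℚ} (hw : AsympOrderGE h (fun n => -w * n)) :
    ∃ n, h n = 0 := by
  obtain ⟨c, hc⟩ := hw
  have hother : ∀ᶠ n : ℕ in atTop, ∀ k ∈ Finset.range (e + 1), k ≠ 0 → ∃ B : ℚ,
      OrderGE (t ^ (2 * A k * n) * (p k).eval (t ^ n)) B ∧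
        (2 * A 0 * n + ((p 0).coeff 0).order : ℤ) + w * k + 1 ≤ B := by
    refine (eventually_all_finset _).2 fun k hk => ?_
    have hk := Finset.mem_range_succ_iff.1 hk
    by_cases hpk : p k = 0
    · exact .of_forall fun n _ => ⟨_, by simp [hpk, orderGE_zero], le_rfl⟩
    by_cases hk₀ : k = 0
    · exact .of_forall fun n hne => absurd hk₀ hne
    filter_upwards [hp.eventually_hasOrder hk hpk, eventually_two_mul_add_le (hA k hk hk₀)
      (((p 0).coeff 0).order - ((p k).coeff 0).order + w * k + 1)] with n hn hle
    exact fun _ => ⟨_, hn.orderGE, by push_cast; linarith⟩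
  obtain ⟨N, hN⟩ := eventually_atTop.1
    ((hp.eventually_hasOrder (Nat.zero_le e) hp.zero_ne_zero).and (hother.and hc))
  choose hdom hother hc using hN
  refine ⟨N, eq_zero_of_forall_orderGE fun d => ?_⟩
  have hbound := orderGE_of_dominant (ψ := fun n => d - w * (n - N)) one_pos (Nat.zero_le e)
    (fun n _ => hh n) hdom (fun n hn k hk hne => ?_) (fun n _ => orderGE_zero _) hc
    (fun n hn hlt => by omega) N le_rfl
  · simpa using hbound
  · obtain ⟨B, hB, hle⟩ := hother n hn k (Finset.mem_range_succ_iff.2 hk) hne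
    refine ⟨B, hB, ?_, ?_⟩ <;> push_cast at hle ⊢ <;> linarith

lemma Admissible.exists_twist_asympOrderGE_zero (hp : Admissible lc e A p)
    (hh : IsSolution e A p h) : ∃ s : ℤ, AsympOrderGE (fun n => t ^ (-(s * n ^ 2)) * h n) 0 := by
  obtain ⟨D, hD⟩ := ((Finset.range e).image fun k => A e - A k).exists_le
  simp only [Finset.mem_image, Finset.mem_range, forall_exists_index, and_imp,
    forall_apply_eq_imp_iff₂] at hD
  refine ⟨-(max D 0 + 1), (hp.twist _).asympOrderGE_zero_of_lt (hh.twist _) fun k hk => ?_⟩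
  have hk' : (k : ℤ) + 1 ≤ e := by exact_mod_cast hk
  nlinarith [hD k hk, hk', le_max_left D 0, le_max_right D 0]

lemma Admissible.exists_forall_twist_le (hp : Admissible lc e A p)
    (hh : IsSolution e A p h) (hne : ∀ n, h n ≠ 0) : ∃ s₁ : ℤ, ∀ s : ℤ, ∀ w : ℚ,
      AsympOrderGE (fun n => t ^ (-(s * n ^ 2)) * h n) (fun n => -w * n) → s ≤ s₁ := by
  obtain ⟨D, hD⟩ := ((Finset.range (e + 1)).image fun k => A 0 - A k).exists_le
  simp only [Finset.mem_image, Finset.mem_range_succ_iff, forall_exists_index, and_imp,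
    forall_apply_eq_imp_iff₂] at hD
  refine ⟨max D 0, fun s w hw => not_lt.1 fun hs => ?_⟩
  have hA : ∀ k ≤ e, k ≠ 0 → A 0 + s * (0 : ℕ) < A k + s * k := fun k hk hk₀ => by
    have hk₀ : (1 : ℤ) ≤ k := by exact_mod_cast Nat.one_le_iff_ne_zero.2 hk₀
    obtain ⟨hDs, hs₀⟩ := max_lt_iff.1 hs
    push_cast
    nlinarith [hD k hk]
  obtain ⟨n, hn⟩ := (hp.twist s).exists_eq_zero_of_lt (hh.twist s) hA hw
  exact mul_ne_zero (zpow_ne_zero _ t_ne_zero) (hne n) hn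

variable {P : K[X]} {M r : ℕ} {φ : ℕ → ℚ}

/-- A single application of the recurrence, with the dominant term of `exists_min_and_min_add`,
turns fast linear growth into quadratic growth. -/
lemma Admissible.exists_linear_imp_quadratic (hp : Admissible lc e A p) (hh : IsSolution e A p h) :
    ∃ W : ℚ, AsympOrderGE h (fun n => W * n) → AsympOrderGE h (fun n => n ^ 2 - W * n) := by
  classical
  set β : ℕ → ℤ := fun k => ((p k).coeff 0).order
  obtain ⟨ks, hks, hmin⟩ := exists_min_and_min_add {k ∈ Finset.range (e + 1) | p k ≠ 0}
    ⟨0, by simpa using hp.zero_ne_zero⟩ A fun k hk l hl => by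
      simp only [Finset.mem_filter, Finset.mem_range_succ_iff] at hk hl
      exact hp.sub_dvd_sub k hk.1 l hl.1
  simp only [Finset.mem_filter, Finset.mem_range_succ_iff, and_imp] at hks hmin
  obtain ⟨W, hW⟩ := ((Finset.range (e + 1)).image fun k =>
    |(β ks - β k : ℚ)| + ks ^ 2 + 1).exists_le
  simp only [Finset.mem_image, Finset.mem_range_succ_iff, forall_exists_index, and_imp,
    forall_apply_eq_imp_iff₂] at hW
  refine ⟨W, asympOrderGE_of_dominant one_pos hks.1 (.of_forall hh)
    (hp.eventually_hasOrder hks.1 hks.2) (fun k hk hne => ?_) (asympOrderGE_zero _)⟩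
  by_cases hpk : p k = 0
  · exact ⟨fun n => max _ _, .of_forall fun n => ⟨by simp [hpk, orderGE_zero],
      sub_le_iff_le_add.1 (le_max_left _ _), sub_le_iff_le_add.1 (le_max_right _ _)⟩⟩
  obtain ⟨hle, hle_add⟩ := hmin k hk hpk
  have hWk := hW k hk
  have hβ := le_abs_self (β ks - β k : ℚ)
  have hβ₀ := abs_nonneg (β ks - β k : ℚ)
  have hsq : (0 : ℚ) ≤ ks ^ 2 := by positivity
  have hlin : ∀ᶠ n : ℕ in atTop, 2 * A ks * n + (β ks - β k + 1 + W * (ks - k)) ≤ 2 * A k * n := by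
    obtain hlt | heq := hle.lt_or_eq
    · exact eventually_two_mul_add_le hlt _
    · have hk : (ks : ℚ) + 1 ≤ k := by exact_mod_cast (by omega : ks + 1 ≤ k)
      exact .of_forall fun n => by rw [heq]; nlinarith [hWk, hβ, hsq, hk, hβ₀]
  have hquad : ∀ᶠ n : ℕ in atTop, 2 * (A ks + ks : ℤ) * n +
      (β ks - β k + ks ^ 2 - k ^ 2 + W * (k - ks)) ≤ 2 * (A k + k : ℤ) * n := by
    obtain hlt | heq := hle_add.lt_or_eq
    · exact eventually_two_mul_add_le hlt _
    · have hk : (k : ℚ) + 1 ≤ ks := by exact_mod_cast (by omega : k + 1 ≤ ks)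
      exact .of_forall fun n => by rw [heq]; nlinarith [hWk, hβ, hsq, hk, hβ₀, sq_nonneg (k : ℚ)]
  refine ⟨fun n => (2 * A k * n + β k : ℤ), ?_⟩
  filter_upwards [hp.eventually_hasOrder hk hpk, hlin, hquad] with n hn hlin hquad
  refine ⟨hn.orderGE, ?_, ?_⟩ <;> push_cast at hlin hquad ⊢ <;> linarith

/-- The quadratic growth rate `s` is the largest one for which `t ^ (-(s * n ^ 2)) * h n` is
bounded below linearly. -/
lemma Admissible.exists_maximal_twist (hp : Admissible lc e A p) (hh : IsSolution e A p h)
    (hne : ∀ n, h n ≠ 0) : ∃ s : ℤ,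
      (∃ w : ℚ, AsympOrderGE (fun n => t ^ (-(s * n ^ 2)) * h n) (fun n => -w * n)) ∧
      ∃ W : ℚ, ¬ AsympOrderGE (fun n => t ^ (-(s * n ^ 2)) * h n) (fun n => W * n) := by
  obtain ⟨s₁, hs₁⟩ := hp.exists_forall_twist_le hh hne
  obtain ⟨s₀, hs₀⟩ := hp.exists_twist_asympOrderGE_zero hh
  obtain ⟨s, hs, hmax⟩ := Int.exists_greatest_of_bdd
    (P := fun s => ∃ w : ℚ, AsympOrderGE (fun n => t ^ (-(s * n ^ 2)) * h n) (fun n => -w * n))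
    ⟨s₁, fun s ⟨w, hw⟩ => hs₁ s w hw⟩ ⟨s₀, 0, by simpa using hs₀.mono_add 0 (by simp)⟩
  obtain ⟨W, hW⟩ := (hp.twist s).exists_linear_imp_quadratic (hh.twist s)
  refine ⟨s, hs, W, fun hlin => (lt_add_one s).not_ge (hmax _ ⟨W, ?_⟩)⟩
  have hsq : AsympOrderGE (fun n : ℕ => (t : K⸨X⸩) ^ (-(n ^ 2) : ℤ)) (fun n => -(n : ℚ) ^ 2) :=
    ⟨0, .of_forall fun n => (hasOrder_t_zpow _).orderGE.mono (by simp)⟩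
  convert! hsq.mul (hW hlin) using 2 with n n
  · rw [← mul_assoc, ← zpow_add₀ t_ne_zero]
    congr 2
    ring
  · ring

lemma Admissible.exists_normalized (hp : Admissible lc e A p) (hh : IsSolution e A p h) :
    ∃ p' : ℕ → K⸨X⸩[X], Normalized lc e p' ∧
      ∀ n : ℕ, ∑ k ∈ Finset.range (e + 1), (p' k).eval (t ^ n) * h (n + k) = 0 := by
  classical
  obtain ⟨ks, hks, hmin⟩ := Finset.exists_min_image {k ∈ Finset.range (e + 1) | p k ≠ 0} A
    ⟨0, by simpa using hp.zero_ne_zero⟩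
  simp only [Finset.mem_filter, Finset.mem_range_succ_iff, and_imp] at hks hmin
  have hne : ∀ {k : ℕ}, (X ^ (2 * (A k - A ks)).toNat * p k).coeff 0 ≠ 0 →
      p k ≠ 0 ∧ (X ^ (2 * (A k - A ks)).toNat * p k).coeff 0 = (p k).coeff 0 := fun {k} hk => by
    rw [mul_coeff_zero, coeff_X_pow] at hk ⊢
    obtain ⟨hif, hpk⟩ := mul_ne_zero_iff.1 hk
    exact ⟨fun hzero => hpk (by rw [hzero, coeff_zero]),
      by rw [if_pos (ite_ne_right_iff.1 hif).1, one_mul]⟩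
  refine ⟨fun k => X ^ (2 * (A k - A ks)).toNat * p k,
    ⟨⟨ks, hks.1, ?_⟩, fun k hk l hl hpk hpl => ?_, fun k hk hpk => ?_⟩, fun n => ?_⟩
  · simpa using hp.coeff_zero_ne_zero ks hks.1 hks.2
  · rw [(hne hpk).2, (hne hpl).2]
    exact hp.sub_dvd_order_sub k hk l hl (hne hpk).1 (hne hpl).1
  · rw [(hne hpk).2, hp.leadingCoeff_eq k hk]
  · rw [← mul_zero (t ^ (-(2 * A ks * n))), ← hh n, Finset.mul_sum]
    refine Finset.sum_congr rfl fun k hk => ?_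
    by_cases hpk : p k = 0
    · simp [hpk]
    have hle := hmin k (Finset.mem_range_succ_iff.1 hk) hpk
    have hexp : ((n * (2 * (A k - A ks)).toNat : ℕ) : ℤ) = -(2 * A ks * n) + 2 * A k * n := by
      rw [Nat.cast_mul, Int.toNat_of_nonneg (by linarith)]
      ring
    rw [eval_mul, eval_pow, eval_X, ← pow_mul, ← zpow_natCast t, hexp, zpow_add₀ t_ne_zero]
    ring

lemma AsympOrderGE.t_zpow_mul (hh : AsympOrderGE h φ) (a : ℕ → ℤ) :
    AsympOrderGE (fun n => t ^ a n * h n) (fun n => a n + φ n) :=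
  AsympOrderGE.mul ⟨0, .of_forall fun n => (hasOrder_t_zpow (a n)).orderGE.mono (by simp)⟩ hh

/-- The dichotomy `Normalized.hasOrder_or_orderGE` is applied to `t ^ (w * n) * h n`, which is
bounded below. -/
lemma Admissible.hasOrder_or_orderGE (hp : Admissible lc e A p) (hh : IsSolution e A p h)
    (hM₀ : 0 < M)
    (hM : ∀ u ∈ powKer P, (∀ n, u (M * n + r) = 0) ∨ ∀ᶠ n in atTop, u (M * n + r) ≠ 0)
    (hP : IsCharMultiple lc e P) {w : ℚ} (hw : AsympOrderGE h (fun n => -w * n)) (J : ℕ) :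
    (∃ j i : ℤ, ∀ᶠ n in atTop, HasOrder (h (M * n + r)) (j * (M * n + r : ℕ) + i)) ∨
      AsympOrderGE (fun n => h (M * n + r)) (fun n => J * (M * n + r : ℕ)) := by
  obtain ⟨w', hw'⟩ := exists_nat_ge w
  obtain ⟨p', hp', hrec⟩ := hp.exists_normalized hh
  have hbdd : AsympOrderGE (fun n => t ^ (w' * n : ℤ) * h n) 0 :=
    (hw.t_zpow_mul _).mono_add 0 (.of_forall fun n => by
      simp only [Pi.zero_apply]
      push_cast
      nlinarith [(Nat.cast_nonneg n : (0 : ℚ) ≤ n)])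
  have hterm : ∀ n k : ℕ, (C (t ^ (-w' * k : ℤ)) * p' k).eval (t ^ n) *
      (t ^ (w' * (n + k : ℕ) : ℤ) * h (n + k)) =
        t ^ (w' * n : ℤ) * ((p' k).eval (t ^ n) * h (n + k)) := fun n k => by
    have ht : (t : K⸨X⸩) ^ (w' * n : ℤ) = t ^ (-w' * k : ℤ) * t ^ (w' * (n + k : ℕ) : ℤ) := by
      rw [← zpow_add₀ t_ne_zero]
      congr 1
      push_cast
      ring
    rw [eval_mul, eval_C, ht]
    ring
  have hback : ∀ n, h (M * n + r) = t ^ (-(w' * (M * n + r : ℕ)) : ℤ) *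
      (t ^ (w' * (M * n + r : ℕ) : ℤ) * h (M * n + r)) := fun n => by
    rw [zpow_neg, inv_mul_cancel_left₀ (zpow_ne_zero _ t_ne_zero)]
  obtain ⟨j, i, hji⟩ | hJ := (hp'.twist (-w')).hasOrder_or_orderGE hM₀ hM hP (J + w')
    (.of_forall fun n => by rw [Finset.sum_congr rfl fun k _ => hterm n k, ← Finset.mul_sum, hrec,
      mul_zero, Pi.zero_apply]) (zero_mem _) hbdd
  · refine Or.inl ⟨j - w', i, hji.mono fun n hn => ?_⟩
    rw [hback]
    convert! (hasOrder_t_zpow _).mul hn using 1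
    ring
  · refine Or.inr ?_
    rw [funext hback]
    refine (hJ.t_zpow_mul _).mono_add 0 (.of_forall fun n => le_of_eq ?_)
    push_cast
    ring

end QuadraticGrowth

section ShiftDependence

variable {K : Type*} [Field K] {h : ℕ → K⸨X⸩} {M j : ℕ}

/-- The shift `h (n + j)` is a linear combination of the shifts `h (n + i * M)`, up to a factor
whose order is linear in `n`, and with coefficients of at most linearly decreasing order. -/
def ShiftDependent (M j : ℕ) (h : ℕ → K⸨X⸩) : Prop :=
  ∃ (E : ℕ) (c : ℕ → K⸨X⸩) (b : ℕ → ℕ → K⸨X⸩),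
    (∃ a β : ℤ, ∀ᶠ n : ℕ in atTop, HasOrder (c n) (a * n + β)) ∧
    (∀ i < E, ∃ D : ℚ, AsympOrderGE (b i) (fun n => D * n)) ∧
    ∀ n, c n * h (n + j) = ∑ i ∈ Finset.range E, b i n * h (n + i * M)

lemma ShiftDependent.twist (hj : ShiftDependent M j h) (s : ℤ) :
    ShiftDependent M j (fun n => t ^ (-(s * n ^ 2)) * h n) := by
  obtain ⟨E, c, b, ⟨a, β, hc⟩, hb, hrel⟩ := hj
  have hshift : ∀ (x y : K⸨X⸩) (n k : ℕ), t ^ (s * (2 * k * n + k ^ 2)) * x *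
      (t ^ (-(s * ((n + k : ℕ) : ℤ) ^ 2)) * y) = t ^ (-(s * n ^ 2)) * (x * y) := fun x y n k => by
    have ht : (t : K⸨X⸩) ^ (-(s * n ^ 2)) =
        t ^ (s * (2 * k * n + k ^ 2)) * t ^ (-(s * ((n + k : ℕ) : ℤ) ^ 2)) := by
      rw [← zpow_add₀ t_ne_zero]
      congr 1
      push_cast
      ring
    rw [ht]
    ring
  refine ⟨E, fun n => t ^ (s * (2 * j * n + j ^ 2)) * c n,
    fun i n => t ^ (s * (2 * (i * M : ℕ) * n + (i * M : ℕ) ^ 2)) * b i n,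
    ⟨s * (2 * j) + a, s * j ^ 2 + β, hc.mono fun n hn => ?_⟩, fun i hi => ?_, fun n => ?_⟩
  · convert! (hasOrder_t_zpow _).mul hn using 1
    ring
  · obtain ⟨D, hD⟩ := hb i hi
    refine ⟨s * (2 * (i * M : ℕ)) + D, (hD.t_zpow_mul _).mono_add (-(s * (i * M : ℕ) ^ 2))
      (.of_forall fun n => le_of_eq ?_)⟩
    push_cast
    ring
  · rw [hshift, hrel, Finset.mul_sum]
    exact Finset.sum_congr rfl fun i _ => (hshift _ _ _ _).symm

lemma ShiftDependent.exists_asympOrderGE (hj : ShiftDependent M j h) (hM : 0 < M) (W : ℚ) :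
    ∃ J₀ : ℕ, ∀ J ≥ J₀, ∀ r, AsympOrderGE (fun n => h (M * n + r)) (fun n => J * (M * n + r : ℕ)) →
      AsympOrderGE (fun n => h (M * n + r + j)) (fun n => W * (M * n + r + j : ℕ)) := by
  obtain ⟨E, c, b, ⟨a, β, hc⟩, hb, hrel⟩ := hj
  choose! D hD using hb
  obtain ⟨J', hJ'⟩ := ((Finset.range E).image fun i => W + a - D i).exists_le
  simp only [Finset.mem_image, Finset.mem_range, forall_exists_index, and_imp,
    forall_apply_eq_imp_iff₂] at hJ'
  obtain ⟨J₀, hJ₀⟩ := exists_nat_ge J'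
  refine ⟨J₀, fun J hJ r hr => ?_⟩
  have hJ : (J₀ : ℚ) ≤ J := by exact_mod_cast hJ
  have hs := tendsto_mul_add_atTop hM r
  have hsum : AsympOrderGE (fun n => c (M * n + r) * h (M * n + r + j))
      (fun n => (W + a) * (M * n + r : ℕ)) := by
    simp only [hrel]
    refine AsympOrderGE.sum fun i hi => ?_
    have hi := Finset.mem_range.1 hi
    have hshift := hr.comp_tendsto (tendsto_add_atTop_nat i)
    simp only [show ∀ n, M * (n + i) + r = M * n + r + i * M by intro n; ring] at hshift
    refine (((hD i hi).comp_tendsto hs).mul hshift).mono_add 0 (.of_forall fun n => ?_)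
    have hle : (W + a - D i) * (M * n + r : ℕ) ≤ J * (M * n + r : ℕ) := by
      gcongr
      exact ((hJ' i hi).trans hJ₀).trans hJ
    have hnonneg : (0 : ℚ) ≤ J * (i * M : ℕ) := by positivity
    push_cast at hle hnonneg ⊢
    linarith
  obtain ⟨B, hB⟩ := hsum
  refine ⟨B + β + W * j, ?_⟩
  filter_upwards [hs.eventually hc, hB] with n hcn hn
  refine hcn.orderGE_of_mul (hn.mono (le_of_eq ?_))
  push_cast
  ring

lemma asympOrderGE_of_forall_residueClass {φ : ℕ → ℚ} (hM : 0 < M) (r : ℕ)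
    (hh : ∀ j < M, AsympOrderGE (fun n => h (M * n + r + j)) (fun n => φ (M * n + r + j))) :
    AsympOrderGE h φ := by
  choose! B hB using hh
  obtain ⟨D, hD⟩ := ((Finset.range M).image B).exists_le
  simp only [Finset.mem_image, Finset.mem_range, forall_exists_index, and_imp,
    forall_apply_eq_imp_iff₂] at hD
  obtain ⟨N, hN⟩ := eventually_atTop.1
    ((eventually_all_finset (Finset.range M)).2 fun j hj => hB j (Finset.mem_range.1 hj))
  refine ⟨D, eventually_atTop.2 ⟨M * N + r, fun n hn => ?_⟩⟩
  have hj := Nat.mod_lt (n - r) hM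
  have hdiv : N ≤ (n - r) / M := (Nat.le_div_iff_mul_le hM).2 (by rw [mul_comm]; omega)
  have hn : M * ((n - r) / M) + r + (n - r) % M = n := by
    have := Nat.div_add_mod (n - r) M
    omega
  have hclass := hN _ hdiv _ (Finset.mem_range.2 hj)
  simp only [hn] at hclass
  exact hclass.mono (by gcongr; exact hD _ hj)

lemma exists_asympOrderGE_of_shiftDependent (hM : 0 < M) (hdep : ∀ j < M, ShiftDependent M j h)
    (W : ℚ) : ∃ J : ℕ, ∀ r,
      AsympOrderGE (fun n => h (M * n + r)) (fun n => J * (M * n + r : ℕ)) →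
        AsympOrderGE h (fun n => W * n) := by
  choose! J hJ using fun j hj => (hdep j hj).exists_asympOrderGE hM W
  obtain ⟨J₀, hJ₀⟩ := ((Finset.range M).image J).exists_le
  simp only [Finset.mem_image, Finset.mem_range, forall_exists_index, and_imp,
    forall_apply_eq_imp_iff₂] at hJ₀
  exact ⟨J₀, fun r hr => asympOrderGE_of_forall_residueClass hM r fun j hj =>
    hJ j hj J₀ (hJ₀ j hj) r hr⟩

end ShiftDependence

/-- In every residue class modulo `M` the order is eventually a quadratic polynomial, with the same
leading coefficient `s` for all classes: fast growth along one class would spread to all of them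
and contradict the maximality of `s`. -/
theorem Admissible.exists_eventually_hasOrder_quadratic {K : Type*} [Field K] {lc : ℕ → K} {e : ℕ}
    {A : ℕ → ℤ} {p : ℕ → K⸨X⸩[X]} {h : ℕ → K⸨X⸩} {P : K[X]} {M : ℕ} (hp : Admissible lc e A p)
    (hh : IsSolution e A p h) (hne : ∀ n, h n ≠ 0) (hM₀ : 0 < M)
    (hM : ∀ u ∈ powKer P, ∀ r, (∀ n, u (M * n + r) = 0) ∨ ∀ᶠ n in atTop, u (M * n + r) ≠ 0)
    (hP : IsCharMultiple lc e P) (hdep : ∀ j < M, ShiftDependent M j h) :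
    ∃ s : ℤ, ∀ r, ∃ j i : ℤ, ∀ᶠ n in atTop, HasOrder (h (M * n + r))
      (s * (M * n + r : ℕ) ^ 2 + (j * (M * n + r : ℕ) + i)) := by
  obtain ⟨s, ⟨w, hw⟩, W, hW⟩ := hp.exists_maximal_twist hh hne
  obtain ⟨J, hJ⟩ := exists_asympOrderGE_of_shiftDependent hM₀ (fun j hj => (hdep j hj).twist s) W
  refine ⟨s, fun r => ?_⟩
  obtain ⟨j, i, hji⟩ := ((hp.twist s).hasOrder_or_orderGE (hh.twist s) hM₀ (fun u hu => hM u hu r)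
    hP hw J).resolve_right fun hfast => hW (hJ r hfast)
  refine ⟨j, i, hji.mono fun n hn => ?_⟩
  have hmul := (hasOrder_t_zpow (s * (M * n + r : ℕ) ^ 2)).mul hn
  rwa [zpow_neg, mul_inv_cancel_left₀ (zpow_ne_zero _ t_ne_zero)] at hmul

/-! ### Linear dependence of shifts -/

section LinearDependence

open Submodule

lemma exists_smul_mem_span_of_linearIndepOn {R V ι : Type*} [CommRing R] [IsDomain R]
    [AddCommGroup V] [Module R V] {s : Finset ι} {v : ι → V} {w : Finset V} {x : V}
    (hv : LinearIndepOn R v s) (hcard : w.card ≤ s.card)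
    (hvw : ∀ i ∈ s, ∃ a : R, a ≠ 0 ∧ a • v i ∈ span R (w : Set V))
    (hx : ∃ a : R, a ≠ 0 ∧ a • x ∈ span R (w : Set V)) :
    ∃ a : R, a ≠ 0 ∧ a • x ∈ span R (v '' s) := by
  classical
  obtain ⟨b, hb, hbx⟩ := hx
  choose! a ha hav using hvw
  let u : Option s → V := fun o => o.elim (b • x) fun i => a i • v i
  have hu : ¬ LinearIndependent R u := fun hu => by
    have hle := linearIndependent_le_span' u hu w (by
      rintro _ ⟨_ | i, rfl⟩
      · exact hbx
      · exact hav i i.2)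
    simp only [Cardinal.mk_fintype, Fintype.card_option, Fintype.card_coe, Finset.coe_sort_coe,
      Nat.cast_le] at hle
    omega
  obtain ⟨g, hg, o, ho⟩ := Fintype.not_linearIndependent_iff.1 hu
  simp only [Fintype.sum_option, u, Option.elim_none, Option.elim_some, smul_smul] at hg
  refine ⟨g none * b, mul_ne_zero (fun hnone => ?_) hb, ?_⟩
  · rw [hnone, zero_mul, zero_smul, zero_add] at hg
    obtain _ | i := o
    · exact ho hnone
    · exact mul_ne_zero ho (ha i i.2) (Fintype.linearIndependent_iff.1 hv _ hg i)
  · rw [eq_neg_of_add_eq_zero_left hg]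
    exact neg_mem (sum_mem fun i _ => smul_mem _ _ (subset_span ⟨i, i.2, rfl⟩))

end LinearDependence

section QSeq

open Submodule

variable {K : Type*} {q : K}

/-- Sequences in `K` as a module over `K[X]`, a polynomial `P` acting by multiplication with
`P (q ^ n)`. -/
def QSeq (_q : K) : Type _ := ℕ → K

/-- The shifted sequence `f (n + k)` as an element of `QSeq q`. -/
def QSeq.shift (q : K) (f : ℕ → K) (k : ℕ) : QSeq q := fun n => f (n + k)

lemma QSeq.shift_shift (f : ℕ → K) (k l : ℕ) :
    QSeq.shift q (QSeq.shift q f k) l = QSeq.shift q f (k + l) :=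
  funext fun n => congrArg f (by ring)

variable [Field K] {f : ℕ → K} {e : ℕ} {P : ℕ → K[X]}

noncomputable instance : AddCommGroup (QSeq q) := inferInstanceAs (AddCommGroup (ℕ → K))

noncomputable instance : Module K[X] (QSeq q) :=
  Module.compHom (ℕ → K) (RingHom.pi fun n => evalRingHom (q ^ n))

/-- The sequence `f` satisfies a nontrivial recurrence `∑ k ≤ e, P k (q ^ n) * f (n + k) = 0`. -/
def HasQRecurrence (q : K) (e : ℕ) (f : ℕ → K) : Prop :=
  ∃ P : ℕ → K[X], (∃ k ≤ e, P k ≠ 0) ∧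
    ∀ n, ∑ k ∈ Finset.range (e + 1), (P k).eval (q ^ n) * f (n + k) = 0

lemma QSeq.smul_apply (P : K[X]) (f : QSeq q) (n : ℕ) : (P • f) n = P.eval (q ^ n) * f n := rfl

lemma QSeq.sum_smul_apply (s : Finset ℕ) (P : ℕ → K[X]) (v : ℕ → QSeq q) (n : ℕ) :
    (∑ k ∈ s, P k • v k) n = ∑ k ∈ s, (P k).eval (q ^ n) * v k n :=
  Finset.sum_apply n s _

/-- The polynomial `P (q ^ r * X ^ M)`. -/
noncomputable def dilate (q : K) (M r : ℕ) (P : K[X]) : K[X] := P.comp (C (q ^ r) * X ^ M)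

lemma eval_dilate (q : K) (M r : ℕ) (P : K[X]) (n : ℕ) :
    (dilate q M r P).eval (q ^ n) = P.eval (q ^ (M * n + r)) := by
  rw [dilate, eval_comp, eval_mul, eval_C, eval_pow, eval_X, ← pow_mul, ← pow_add, mul_comm n,
    add_comm r]

lemma QSeq.shift_smul (P : K[X]) (f : QSeq q) :
    QSeq.shift q (P • f) 1 = dilate q 1 1 P • QSeq.shift q f 1 :=
  funext fun n => by rw [QSeq.smul_apply, eval_dilate, one_mul]; rfl

lemma dilate_ne_zero (hq : q ≠ 0) {M : ℕ} (hM : 0 < M) (r : ℕ) {P : K[X]} (hP : P ≠ 0) :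
    dilate q M r P ≠ 0 := fun h => by
  obtain h | ⟨-, h⟩ := comp_eq_zero_iff.1 h
  · exact hP h
  · have hdeg := congrArg natDegree h
    rw [natDegree_C, natDegree_C_mul_X_pow _ _ (pow_ne_zero _ hq)] at hdeg
    exact hM.ne' hdeg

/-- Shifting and multiplying by the last coefficient of the recurrence preserves the span of the
first `e + 1` shifts. -/
lemma smul_shift_mem_span (hrec : ∑ k ∈ Finset.range (e + 2), P k • QSeq.shift q f k = 0)
    {y : QSeq q} (hy : y ∈ span K[X] (QSeq.shift q f '' Finset.range (e + 1))) :
    P (e + 1) • QSeq.shift q y 1 ∈ span K[X] (QSeq.shift q f '' Finset.range (e + 1)) := by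
  have hshift_mem : ∀ k ≤ e, QSeq.shift q f k ∈
      span K[X] (QSeq.shift q f '' Finset.range (e + 1)) := fun k hk =>
    subset_span ⟨k, by simpa using hk, rfl⟩
  induction hy using span_induction with
  | zero =>
    rw [show QSeq.shift q (0 : QSeq q) 1 = 0 from rfl, smul_zero]
    exact zero_mem _
  | add y z _ _ hy hz =>
    rw [show QSeq.shift q (y + z) 1 = QSeq.shift q y 1 + QSeq.shift q z 1 from rfl, smul_add]
    exact add_mem hy hz
  | smul c y _ hy =>
    rw [QSeq.shift_smul, smul_comm]
    exact smul_mem _ _ hy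
  | mem y hy =>
    obtain ⟨k, hk, rfl⟩ := hy
    rw [QSeq.shift_shift]
    obtain hk | rfl := (Finset.mem_range_succ_iff.1 hk).lt_or_eq
    · exact smul_mem _ _ (hshift_mem _ hk)
    · rw [Finset.sum_range_succ] at hrec
      rw [eq_neg_of_add_eq_zero_right hrec]
      exact neg_mem (sum_mem fun k hk => smul_mem _ _ (hshift_mem k (by simpa using hk)))

lemma exists_smul_shift_mem_span (hq : q ≠ 0) (hP : P (e + 1) ≠ 0)
    (hrec : ∑ k ∈ Finset.range (e + 2), P k • QSeq.shift q f k = 0) (i : ℕ) :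
    ∃ Q : K[X], Q ≠ 0 ∧
      Q • QSeq.shift q f i ∈ span K[X] (QSeq.shift q f '' Finset.range (e + 1)) := by
  induction i with
  | zero => exact ⟨1, one_ne_zero, smul_mem _ _ (subset_span ⟨0, by simp, rfl⟩)⟩
  | succ i ih =>
    obtain ⟨Q, hQ, hmem⟩ := ih
    refine ⟨P (e + 1) * dilate q 1 1 Q, mul_ne_zero hP (dilate_ne_zero hq one_pos 1 hQ), ?_⟩
    rw [mul_smul, ← QSeq.shift_shift, ← QSeq.shift_smul]
    exact smul_shift_mem_span hrec hmem

lemma hasQRecurrence_residueClass_of_not_linearIndepOn (hq : q ≠ 0) {M : ℕ} (hM : 0 < M)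
    (h : ¬ LinearIndepOn K[X] (fun k => QSeq.shift q f (k * M)) (Finset.range (e + 1))) (r : ℕ) :
    HasQRecurrence q e (fun n => f (M * n + r)) := by
  obtain ⟨b, hb, k, hk, hbk⟩ := not_linearIndepOn_finset_iff.1 h
  refine ⟨fun k => dilate q M r (b k), ⟨k, by simpa using hk, dilate_ne_zero hq hM r hbk⟩,
    fun n => ?_⟩
  rw [← show (0 : QSeq q) (M * n + r) = 0 from rfl, ← hb, QSeq.sum_smul_apply]
  refine Finset.sum_congr rfl fun k _ => ?_
  rw [eval_dilate]
  exact congrArg (_ * f ·) (by ring)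

/-- Among the shifts of a solution there are at most `e + 1` independent ones, so either the shifts
by multiples of `M` already satisfy a recurrence of lower order, or they generate all others. -/
lemma hasQRecurrence_residueClass_or_shift_mem_span (hq : q ≠ 0) (hP : P (e + 1) ≠ 0)
    (hrec : ∀ n, ∑ k ∈ Finset.range (e + 2), (P k).eval (q ^ n) * f (n + k) = 0) {M : ℕ}
    (hM : 0 < M) : (∀ r, HasQRecurrence q e (fun n => f (M * n + r))) ∨
      ∀ j, ∃ Q : K[X], Q ≠ 0 ∧ ∃ S : ℕ → K[X], ∀ n, Q.eval (q ^ n) * f (n + j) =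
        ∑ i ∈ Finset.range (e + 1), (S i).eval (q ^ n) * f (n + i * M) := by
  classical
  have hrec : ∑ k ∈ Finset.range (e + 2), P k • QSeq.shift q f k = 0 :=
    funext fun n => (QSeq.sum_smul_apply _ _ _ n).trans (hrec n)
  have hmem := exists_smul_shift_mem_span hq hP hrec
  rw [← Finset.coe_image] at hmem
  refine or_iff_not_imp_left.2 fun hnot j => ?_
  have hindep : LinearIndepOn K[X] (fun k => QSeq.shift q f (k * M)) (Finset.range (e + 1)) :=
    not_not.1 fun h => hnot (hasQRecurrence_residueClass_of_not_linearIndepOn hq hM h)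
  obtain ⟨Q, hQ, hQj⟩ := exists_smul_mem_span_of_linearIndepOn hindep Finset.card_image_le
    (fun i _ => hmem (i * M)) (hmem j)
  obtain ⟨S, hS⟩ := (mem_span_image_finset_iff_exists_fun' K[X]).1 hQj
  exact ⟨Q, hQ, S, fun n => (congrFun hS n).symm.trans (QSeq.sum_smul_apply _ _ _ n)⟩

end QSeq

/-! ### Quadratic quasi-polynomials -/

section QuasiQuadratic

variable {u d : ℕ → ℚ} {M : ℕ}

/-- The sequence `u` eventually agrees with a polynomial of degree at most two. -/
def EventuallyQuadratic (u : ℕ → ℚ) : Prop :=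
  ∃ a b c : ℚ, ∀ᶠ n : ℕ in atTop, u n = a * n ^ 2 + b * n + c

/-- The sequence `d` eventually agrees with a quadratic quasi-polynomial, expressed through the
residue classes `M * n + r`. -/
def IsQuasiQuadratic (d : ℕ → ℚ) : Prop :=
  ∃ M > 0, ∀ r, EventuallyQuadratic (fun n => d (M * n + r))

lemma EventuallyQuadratic.of_comp_succ (h : EventuallyQuadratic (fun n => u (n + 1))) :
    EventuallyQuadratic u := by
  obtain ⟨a, b, c, h⟩ := h
  refine ⟨a, b - 2 * a, c - b + a, ?_⟩
  rw [← map_add_atTop_eq_nat 1, eventually_map]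
  filter_upwards [h] with n hn
  rw [hn]
  push_cast
  ring

lemma EventuallyQuadratic.comp_mul (h : EventuallyQuadratic u) {x : ℕ} (hx : 0 < x) :
    EventuallyQuadratic (fun n => u (x * n)) := by
  obtain ⟨a, b, c, h⟩ := h
  refine ⟨a * x ^ 2, b * x, c, ?_⟩
  filter_upwards [(tendsto_id.const_mul_atTop' hx).eventually h] with n hn
  rw [id_eq] at hn
  rw [hn]
  push_cast
  ring

lemma IsQuasiQuadratic.of_comp_succ (h : IsQuasiQuadratic (fun n => d (n + 1))) :
    IsQuasiQuadratic d := by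
  obtain ⟨M, hM, h⟩ := h
  refine ⟨M, hM, fun r => .of_comp_succ ?_⟩
  convert! h (r + M - 1) using 2 with n
  exact congrArg d (by rw [mul_add]; omega)

lemma IsQuasiQuadratic.of_forall_residueClass (hM : 0 < M)
    (h : ∀ r, IsQuasiQuadratic (fun n => d (M * n + r))) : IsQuasiQuadratic d := by
  choose L hL h using h
  have hprod : 0 < ∏ v ∈ Finset.range M, L v := Finset.prod_pos fun v _ => hL v
  refine ⟨M * ∏ v ∈ Finset.range M, L v, Nat.mul_pos hM hprod, fun r => ?_⟩
  obtain ⟨x, hx⟩ : L (r % M) ∣ ∏ v ∈ Finset.range M, L v :=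
    Finset.dvd_prod_of_mem _ (Finset.mem_range.2 (Nat.mod_lt _ hM))
  convert! (h (r % M) (r / M)).comp_mul (Nat.pos_of_mul_pos_left (hx ▸ hprod)) using 2 with n
  refine congrArg d ?_
  calc M * (∏ v ∈ Finset.range M, L v) * n + r
      = M * (L (r % M) * x) * n + (M * (r / M) + r % M) := by rw [hx, Nat.div_add_mod]
    _ = M * (L (r % M) * (x * n) + r / M) + r % M := by ring

lemma IsQuasiQuadratic.exists_periodic (h : IsQuasiQuadratic d) : ∃ (N : ℕ) (π : ℕ), 0 < π ∧
    ∃ c₂ c₁ c₀ : ℕ → ℚ,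
      (∀ n, c₂ (n + π) = c₂ n) ∧ (∀ n, c₁ (n + π) = c₁ n) ∧ (∀ n, c₀ (n + π) = c₀ n) ∧
      ∀ n, N ≤ n → d n = c₂ n * (n : ℚ) ^ 2 + c₁ n * (n : ℚ) + c₀ n := by
  obtain ⟨M, hM, h⟩ := h
  choose a b c h using h
  obtain ⟨N, hN⟩ := eventually_atTop.1
    ((eventually_all_finset (Finset.range M)).2 fun r _ => h r)
  refine ⟨M * N, M, hM, fun n => a (n % M) / M ^ 2,
    fun n => b (n % M) / M - 2 * a (n % M) * (n % M : ℕ) / M ^ 2,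
    fun n => c (n % M) - b (n % M) * (n % M : ℕ) / M + a (n % M) * (n % M : ℕ) ^ 2 / M ^ 2,
    fun n => by simp, fun n => by simp, fun n => by simp, fun n hn => ?_⟩
  have hdiv : N ≤ n / M := (Nat.le_div_iff_mul_le hM).2 (mul_comm M N ▸ hn)
  have hn := hN (n / M) hdiv (n % M) (Finset.mem_range.2 (Nat.mod_lt n hM))
  have hM : (M : ℚ) ≠ 0 := by exact_mod_cast hM.ne'
  have hcast : (n : ℚ) = M * (n / M : ℕ) + (n % M : ℕ) := by
    exact_mod_cast (Nat.div_add_mod n M).symm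
  simp only [Nat.div_add_mod] at hn
  rw [hn, hcast]
  field_simp
  ring

end QuasiQuadratic

/-! ### Substituting a negative power of `t` -/

section Substitution

variable {K : Type*} [Field K] {R : ℕ}

lemma hasOrder_C {a : K} (ha : a ≠ 0) : HasOrder (HahnSeries.C a : K⸨X⸩) 0 :=
  ⟨HahnSeries.C_ne_zero ha, HahnSeries.order_C⟩

lemma hasOrder_eval₂_t_zpow_neg (hR : 0 < R) {p : K[X]} (hp : p ≠ 0) :
    HasOrder (p.eval₂ HahnSeries.C (t ^ (-R : ℤ))) (-R * p.natDegree) := by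
  have hterm : ∀ i, p.coeff i ≠ 0 →
      HasOrder (HahnSeries.C (p.coeff i) * (t ^ (-R : ℤ)) ^ i) (-R * i) := fun i hi => by
    rw [← zpow_natCast, ← zpow_mul]
    simpa only [zero_add] using (hasOrder_C hi).mul (hasOrder_t_zpow (-R * i))
  rw [eval₂_eq_sum_range, Finset.sum_range_succ, add_comm]
  refine (hterm _ (leadingCoeff_ne_zero.2 hp)).add_orderGE
    (c := (-R * p.natDegree + 1 : ℤ)) (OrderGE.sum fun i hi => ?_) (by exact_mod_cast lt_add_one _)
  by_cases hi₀ : p.coeff i = 0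
  · simpa [hi₀] using orderGE_zero _
  · have hi : (i : ℤ) + 1 ≤ p.natDegree := by exact_mod_cast Finset.mem_range.1 hi
    have hR : (1 : ℤ) ≤ R := by exact_mod_cast hR
    exact (hterm i hi₀).orderGE.mono (by exact_mod_cast (by nlinarith [hR, hi]))

/-- Substituting `X = t ^ (-R)` with `R > 0` expands rational functions at infinity and turns
degrees into orders. -/
lemma exists_ringHom_order_eq (K : Type*) [Field K] (hR : 0 < R) : ∃ ι : RatFunc K →+* K⸨X⸩,
    ι RatFunc.X = t ^ (-R : ℤ) ∧ ∀ x ≠ 0, (ι x).order = -R * x.intDegree := by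
  let φ : K[X] →+* K⸨X⸩ := eval₂RingHom HahnSeries.C (t ^ (-R : ℤ))
  have hφ : ∀ p ≠ 0, HasOrder (φ p) (-R * p.natDegree) := fun p => hasOrder_eval₂_t_zpow_neg hR
  have hinj : Function.Injective φ :=
    (injective_iff_map_eq_zero φ).2 fun p hp => not_imp_not.1 (fun hne => (hφ p hne).1) hp
  let ι : RatFunc K →+* K⸨X⸩ := IsFractionRing.lift hinj
  have hι : ∀ p, ι (algebraMap _ _ p) = φ p := IsFractionRing.lift_algebraMap hinj
  refine ⟨ι, ?_, fun x hx => ?_⟩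
  · rw [← RatFunc.algebraMap_X, hι]
    exact eval₂_X _ _
  · have hnum : φ x.num = ι x * φ x.denom := by
      rw [← hι, ← hι, ← map_mul]
      congr 1
      exact (div_eq_iff (RatFunc.algebraMap_ne_zero x.denom_ne_zero)).1 x.num_div_denom
    have horder := congrArg HahnSeries.order hnum
    rw [HahnSeries.order_mul ((_root_.map_ne_zero ι).2 hx) (hφ _ x.denom_ne_zero).1,
      (hφ _ (RatFunc.num_ne_zero hx)).2, (hφ _ x.denom_ne_zero).2] at horder
    rw [RatFunc.intDegree]
    linarith

end Substitution

section Reversal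

open scoped Nat

variable {K : Type*} [Field K] {R e M j : ℕ} {Q : ℕ → K⸨X⸩[X]} {h : ℕ → K⸨X⸩}

lemma eval_t_zpow_neg (Q : K⸨X⸩[X]) (R n : ℕ) : Q.eval (t ^ (-(R * n) : ℤ)) =
    t ^ (-(R * Q.natDegree * n) : ℤ) * (expand _ R Q.reverse).eval (t ^ n) := by
  have ht : (t : K⸨X⸩) ^ (-(R * n) : ℤ) ≠ 0 := zpow_ne_zero _ t_ne_zero
  let := invertibleOfNonzero ht
  have hrev := eval₂_reverse_mul_pow (RingHom.id _) (t ^ (-(R * n) : ℤ)) Q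
  rw [invOf_eq_inv, ← zpow_neg, neg_neg, eval₂_id, eval₂_id] at hrev
  rw [← hrev, expand_eval, mul_comm, ← zpow_natCast, ← zpow_mul]
  congr 2
  · ring
  · rw [← pow_mul]
    exact_mod_cast congrArg (t ^ ·) (mul_comm R n)

lemma coeff_zero_expand_reverse (hR : 0 < R) (Q : K⸨X⸩[X]) :
    (expand _ R Q.reverse).coeff 0 = Q.leadingCoeff := by
  rw [coeff_expand hR, if_pos (dvd_zero R), Nat.zero_div, coeff_zero_reverse]

lemma eventually_hasOrder_eval_t_zpow_neg (hR : 0 < R) {Q : K⸨X⸩[X]} (hQ : Q ≠ 0) :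
    ∀ᶠ n : ℕ in atTop, HasOrder (Q.eval (t ^ (-(R * n) : ℤ)))
      (-(R * Q.natDegree) * n + Q.leadingCoeff.order) := by
  have hcoeff := coeff_zero_expand_reverse hR Q
  filter_upwards [eventually_hasOrder_eval_t_pow
    (hcoeff.trans_ne (leadingCoeff_ne_zero.2 hQ))] with n hn
  rw [eval_t_zpow_neg, ← hcoeff, neg_mul]
  exact (hasOrder_t_zpow _).mul hn

lemma asympOrderGE_eval_t_zpow_neg (Q : K⸨X⸩[X]) (R : ℕ) :
    AsympOrderGE (fun n => Q.eval (t ^ (-(R * n) : ℤ))) (fun n => -(R * Q.natDegree) * n) := by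
  simp only [eval_t_zpow_neg]
  exact ((asympOrderGE_eval_t_pow _).t_zpow_mul _).mono_add 0
    (.of_forall fun n => by push_cast; simp)

lemma shiftDependent_of_eval_t_zpow_neg (hR : 0 < R) {C : K⸨X⸩[X]} (hC : C ≠ 0)
    (hrel : ∀ n : ℕ, C.eval (t ^ (-(R * n) : ℤ)) * h (n + j) =
      ∑ i ∈ Finset.range e, (Q i).eval (t ^ (-(R * n) : ℤ)) * h (n + i * M)) :
    ShiftDependent M j h :=
  ⟨e, _, _, ⟨_, _, eventually_hasOrder_eval_t_zpow_neg hR hC⟩,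
    fun i _ => ⟨_, asympOrderGE_eval_t_zpow_neg (Q i) R⟩, hrel⟩

lemma sub_dvd_sub_of_factorial_dvd {A : ℕ → ℤ} (hA : ∀ k, (e ! : ℤ) ∣ A k) {k l : ℕ} (hk : k ≤ e)
    (hl : l ≤ e) : (k : ℤ) - l ∣ A k - A l := by
  obtain rfl | hne := eq_or_ne k l
  · simp
  · have hdvd : (k : ℤ) - l ∣ e ! := Int.natAbs_dvd.1
      (Int.natCast_dvd_natCast.2 (Nat.dvd_factorial (by omega) (by omega)))
    exact dvd_sub (hdvd.trans (hA k)) (hdvd.trans (hA l))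

lemma admissible_expand_reverse (h0 : Q 0 ≠ 0) (he : Q e ≠ 0)
    (hord : ∀ k, (e ! : ℤ) ∣ (Q k).leadingCoeff.order) :
    Admissible (fun k => (Q k).leadingCoeff.leadingCoeff) e
      (fun k => -(e ! * (Q k).natDegree)) (fun k => expand _ (2 * e !) (Q k).reverse) := by
  have hR : 0 < 2 * e ! := by positivity
  have hne : ∀ {k}, expand _ (2 * e !) (Q k).reverse ≠ 0 ↔ Q k ≠ 0 := fun {k} => by
    rw [Ne, expand_eq_zero hR, reverse_eq_zero]
  refine ⟨hne.2 h0, hne.2 he, fun k _ hk => ?_, fun k hk l hl => ?_, fun k hk l hl _ _ => ?_,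
    fun k _ => ?_⟩
  · rw [coeff_zero_expand_reverse hR]
    exact leadingCoeff_ne_zero.2 (hne.1 hk)
  · exact sub_dvd_sub_of_factorial_dvd (A := fun k => -(e ! * (Q k).natDegree))
      (fun k => (dvd_mul_right _ _).neg_right) hk hl
  · simp only [coeff_zero_expand_reverse hR]
    exact sub_dvd_sub_of_factorial_dvd hord hk hl
  · rw [coeff_zero_expand_reverse hR]

lemma isSolution_expand_reverse (hrec : ∀ n : ℕ,
    ∑ k ∈ Finset.range (e + 1), (Q k).eval (t ^ (-((2 * e ! : ℕ) * n) : ℤ)) * h (n + k) = 0) :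
    IsSolution e (fun k => -(e ! * (Q k).natDegree)) (fun k => expand _ (2 * e !) (Q k).reverse)
      h := fun n => by
  rw [← hrec n]
  refine Finset.sum_congr rfl fun k _ => ?_
  rw [eval_t_zpow_neg]
  congr 3
  push_cast
  ring

end Reversal

/-! ### Degrees of q-holonomic sequences -/

section Degree

open scoped Nat

lemma intDegree_X_pow {K : Type*} [Field K] (n : ℕ) :
    ((RatFunc.X : RatFunc K) ^ n).intDegree = n := by
  rw [← RatFunc.algebraMap_X, ← map_pow, RatFunc.intDegree_polynomial, natDegree_X_pow]

lemma eq_zero_of_forall_eval_X_pow_eq_zero {K : Type*} [Field K] {P : (RatFunc K)[X]}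
    (hP : ∀ n : ℕ, P.eval (RatFunc.X ^ n) = 0) : P = 0 := by
  have hinj : Function.Injective fun n : ℕ => (RatFunc.X : RatFunc K) ^ n := fun m n hmn => by
    have hdeg := congrArg RatFunc.intDegree hmn
    simpa only [intDegree_X_pow, Nat.cast_inj] using hdeg
  refine eq_zero_of_infinite_isRoot P ((Set.infinite_range_of_injective hinj).mono ?_)
  rintro _ ⟨n, rfl⟩
  exact hP n

lemma eventuallyQuadratic_intDegree {K : Type*} [Field K] {f : ℕ → RatFunc K} {R M r : ℕ}
    {s j i : ℤ} {ι : RatFunc K →+* K⸨X⸩} (hR : 0 < R)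
    (hι : ∀ x ≠ 0, (ι x).order = -R * x.intDegree)
    (h : ∀ᶠ n in atTop, HasOrder (ι (f (M * n + r)))
      (s * (M * n + r : ℕ) ^ 2 + (j * (M * n + r : ℕ) + i))) :
    EventuallyQuadratic (fun n => (f (M * n + r)).intDegree) := by
  refine ⟨-(s * M ^ 2) / R, -(2 * s * M * r + j * M) / R, -(s * r ^ 2 + j * r + i) / R, ?_⟩
  filter_upwards [h] with n hn
  have hdeg := (hι _ ((map_ne_zero ι).1 hn.1)).symm.trans hn.2
  have hdeg : -(R : ℚ) * (f (M * n + r)).intDegree =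
      s * (M * n + r) ^ 2 + (j * (M * n + r) + i) := by exact_mod_cast hdeg
  have hR : (R : ℚ) ≠ 0 := by exact_mod_cast hR.ne'
  field_simp
  linarith

variable {f : ℕ → RatFunc ℚ} {e : ℕ} {P : ℕ → (RatFunc ℚ)[X]}

/-- Along the residue classes modulo the period of the characteristic roots, either the shifts are
dependent enough for the growth analysis to apply, or the recurrence has a lower order. -/
lemma isQuasiQuadratic_intDegree_or_hasQRecurrence (hf : ∀ n, f n ≠ 0) (h0 : P 0 ≠ 0)
    (he : P (e + 1) ≠ 0)
    (hrec : ∀ n, ∑ k ∈ Finset.range (e + 2), (P k).eval (RatFunc.X ^ n) * f (n + k) = 0) :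
    IsQuasiQuadratic (fun n => (f n).intDegree) ∨
      ∃ M > 0, ∀ r, HasQRecurrence RatFunc.X e (fun n => f (M * n + r)) := by
  have hR : 0 < 2 * (e + 1)! := by positivity
  obtain ⟨ι, hιX, hord⟩ := exists_ringHom_order_eq ℚ hR
  have hmap : ∀ {Q : (RatFunc ℚ)[X]}, Q ≠ 0 → Q.map ι ≠ 0 := fun hQ =>
    (Polynomial.map_ne_zero_iff ι.injective).2 hQ
  have heval : ∀ (Q : (RatFunc ℚ)[X]) (n : ℕ),
      (Q.map ι).eval (t ^ (-((2 * (e + 1)! : ℕ) * n) : ℤ)) = ι (Q.eval (RatFunc.X ^ n)) :=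
    fun Q n => by
      rw [← neg_mul, zpow_mul, ← hιX, zpow_natCast, ← map_pow, eval_map, eval₂_at_apply]
  obtain ⟨C, hC⟩ := exists_isCharMultiple (fun k => ((P k).map ι).leadingCoeff.leadingCoeff) (e + 1)
  obtain ⟨M, hM, hperiod⟩ := exists_period_forall_eq_zero_or_eventually_ne_zero hC.1
  refine (hasQRecurrence_residueClass_or_shift_mem_span RatFunc.X_ne_zero he hrec hM).symm.imp
    (fun hspan => ?_) fun h => ⟨M, hM, h⟩
  have hdep : ∀ j < M, ShiftDependent M j (fun n => ι (f n)) := fun j _ => by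
    obtain ⟨Q, hQ, S, hrel⟩ := hspan j
    refine shiftDependent_of_eval_t_zpow_neg hR (hmap hQ) (Q := fun i => (S i).map ι)
      (e := e + 1) fun n => ?_
    simpa only [heval, map_sum, map_mul] using congrArg ι (hrel n)
  have hadm := admissible_expand_reverse (Q := fun k => (P k).map ι) (hmap h0) (hmap he) fun k => by
    rw [leadingCoeff_map]
    obtain h | h := eq_or_ne (P k).leadingCoeff 0
    · simp [h]
    · rw [hord _ h]
      exact ⟨-2 * (P k).leadingCoeff.intDegree, by push_cast; ring⟩
  have hsol : IsSolution (e + 1) _ _ (fun n => ι (f n)) :=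
    isSolution_expand_reverse (Q := fun k => (P k).map ι) fun n => by
      simpa only [heval, map_sum, map_mul, map_zero] using congrArg ι (hrec n)
  obtain ⟨s, hs⟩ := hadm.exists_eventually_hasOrder_quadratic hsol
    (fun n => (_root_.map_ne_zero ι).2 (hf n)) hM
    (fun u hu => let ⟨N, hN⟩ := mem_powKer.1 hu; hperiod N u hN) hC hdep
  refine ⟨M, hM, fun r => ?_⟩
  obtain ⟨j, i, hji⟩ := hs r
  exact eventuallyQuadratic_intDegree hR hord hji

theorem isQuasiQuadratic_intDegree (hf : ∀ n, f n ≠ 0) (h : HasQRecurrence RatFunc.X e f) :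
    IsQuasiQuadratic (fun n => (f n).intDegree) := by
  induction e generalizing f with
  | zero =>
    obtain ⟨P, ⟨k, hk, hPk⟩, hrec⟩ := h
    obtain rfl := Nat.le_zero.1 hk
    refine absurd (eq_zero_of_forall_eval_X_pow_eq_zero fun n => ?_) hPk
    have hrec := hrec n
    rw [zero_add, Finset.sum_range_one, add_zero] at hrec
    exact (mul_eq_zero.1 hrec).resolve_right (hf n)
  | succ e ih =>
    obtain ⟨P, ⟨k, hk, hPk⟩, hrec⟩ := h
    by_cases he : P (e + 1) = 0
    · refine ih hf ⟨P, ⟨k, ?_, hPk⟩, fun n => ?_⟩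
      · exact Nat.lt_succ_iff.1 (hk.lt_of_ne fun hke => hPk (hke ▸ he))
      · simpa [Finset.sum_range_succ _ (e + 1), he] using hrec n
    by_cases h0 : P 0 = 0
    · refine IsQuasiQuadratic.of_comp_succ
        (ih (fun n => hf (n + 1)) ⟨fun k => P (k + 1), ⟨e, le_rfl, he⟩, fun n => ?_⟩)
      simpa [Finset.sum_range_succ' _ (e + 1), h0, add_assoc, add_comm 1] using hrec n
    obtain h | ⟨M, hM, h⟩ := isQuasiQuadratic_intDegree_or_hasQRecurrence hf h0 he hrec
    · exact h
    · exact .of_forall_residueClass hM fun r => ih (fun n => hf (M * n + r)) (h r)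

end Degree

section TwoVariables

variable {K L : Type*} [Field K] [Field L] [Algebra K L] {q : L}

/-- The specialization `a (X, q)` of a two-variable polynomial `a (u, v)`, a polynomial in `u`. -/
noncomputable def specializeSnd (q : L) (a : MvPolynomial (Fin 2) K) : L[X] :=
  mapAlgHom (MvPolynomial.aeval fun _ => q) (MvPolynomial.finSuccEquiv K 1 a)

lemma eval_specializeSnd (q x : L) (a : MvPolynomial (Fin 2) K) :
    (specializeSnd q a).eval x = MvPolynomial.aeval ![x, q] a := by
  have hhom : (((aeval x : L[X] →ₐ[L] L).restrictScalars K).comp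
      (mapAlgHom (MvPolynomial.aeval fun _ => q))).comp
        (MvPolynomial.finSuccEquiv K 1).toAlgHom = MvPolynomial.aeval ![x, q] :=
    MvPolynomial.algHom_ext fun i => by
      refine Fin.cases ?_ (fun j => ?_) i
      · simp [MvPolynomial.finSuccEquiv_X_zero]
      · simp [MvPolynomial.finSuccEquiv_X_succ]
  exact DFunLike.congr_fun hhom a

lemma specializeSnd_ne_zero (hq : Transcendental K q) {a : MvPolynomial (Fin 2) K} (ha : a ≠ 0) :
    specializeSnd q a ≠ 0 := by
  have hq : AlgebraicIndependent K fun _ : Fin 1 => q :=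
    algebraicIndependent_unique_type_iff.2 hq
  exact (Polynomial.map_ne_zero_iff hq).2
    ((map_ne_zero_iff _ (MvPolynomial.finSuccEquiv K 1).injective).2 ha)

lemma hasQRecurrence_of_aeval (hq : Transcendental K q) {f : ℕ → L} {d : ℕ}
    {a : Fin (d + 1) → MvPolynomial (Fin 2) K} (ha : ∃ k, a k ≠ 0)
    (hrec : ∀ n : ℕ,
      ∑ k : Fin (d + 1), MvPolynomial.aeval ![q ^ n, q] (a k) * f (n + k) = 0) :
    HasQRecurrence q d f := by
  obtain ⟨k, hk⟩ := ha
  have hval : ∀ k : Fin (d + 1), Function.extend Fin.val (specializeSnd q ∘ a) 0 (k : ℕ) =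
      specializeSnd q (a k) := Fin.val_injective.extend_apply _ _
  refine ⟨Function.extend Fin.val (specializeSnd q ∘ a) 0, ⟨k, k.is_le, ?_⟩, fun n => ?_⟩
  · rw [hval]
    exact specializeSnd_ne_zero hq hk
  · simpa only [Finset.sum_range, hval, eval_specializeSnd] using hrec n

end TwoVariables

end QHolonomic

/-- If `f : ℕ → ℚ(q)` is a q-holonomic sequence of nonzero rational
functions, then for all sufficiently large `n` the degree of `f n` is a quadratic
quasi-polynomial in `n`. -/
theorem degree_of_qHolonomic_is_quadratic_quasiPolynomial
    (f : ℕ → RatFunc ℚ) (hf : ∀ n, f n ≠ 0)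
    (d : ℕ) (a : Fin (d + 1) → MvPolynomial (Fin 2) ℚ)
    (ha : ∃ k, a k ≠ 0)
    (hrec : ∀ n : ℕ,
      ∑ k : Fin (d + 1),
        (MvPolynomial.aeval ![(RatFunc.X : RatFunc ℚ) ^ n, RatFunc.X]) (a k) * f (n + k) = 0) :
    ∃ (N : ℕ) (π : ℕ), 0 < π ∧
      ∃ c₂ c₁ c₀ : ℕ → ℚ,
        (∀ n, c₂ (n + π) = c₂ n) ∧ (∀ n, c₁ (n + π) = c₁ n) ∧ (∀ n, c₀ (n + π) = c₀ n) ∧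
        ∀ n, N ≤ n →
          ((f n).intDegree : ℚ) = c₂ n * (n : ℚ) ^ 2 + c₁ n * (n : ℚ) + c₀ n := by
  -- Instance search on `RatFunc ℚ` finds `DivisionRing.toRatAlgebra`.
  have hX : Transcendental ℚ (RatFunc.X : RatFunc ℚ) := by
    convert! RatFunc.transcendental_X (K := ℚ)
    exact Subsingleton.elim _ _
  have hrec_q : QHolonomic.HasQRecurrence RatFunc.X d f :=
    QHolonomic.hasQRecurrence_of_aeval hX ha hrec
  exact (QHolonomic.isQuasiQuadratic_intDegree hf hrec_q).exists_periodic
end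

section
/- Let a : ℕ → ℤ be an integer-valued quadratic quasi-polynomial: there exist a positive integer π and functions c₂, c₁, c₀ : ℕ → ℚ, each periodic with period π, such that (a(n) : ℚ) = c₂(n)·n² + c₁(n)·n + c₀(n) for all n ∈ ℕ. Then for every slope s of a, i.e. for every value s = 2·c₂(n) with n ∈ ℕ, one has s·π² ∈ ℤ. -/
/-!
The `d`-th forward difference with step `h` treats `h`-periodic coefficients as constants, so it
maps a quasi-polynomial of degree `d` and period `h` to `d! * h ^ d` times its leading coefficient.
It is also a `ℤ`-linear combination of translates, so it preserves integrality.
-/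

open Finset Function fwdDiff
open scoped Nat

section ForwardDifference

variable {M G : Type*} [AddCommMonoid M] [AddCommGroup G] {h : M}

lemma fwdDiff_iter_mem {S : AddSubgroup G} {f : M → G} (hf : ∀ x, f x ∈ S) (n : ℕ) (x : M) :
    Δ_[h] ^[n] f x ∈ S := by
  rw [fwdDiff_iter_eq_sum_shift]
  exact S.sum_mem fun k _ ↦ S.zsmul_mem (hf _) _

lemma fwdDiff_eq_zero_of_periodic {c : M → G} (hc : Periodic c h) : Δ_[h] c = 0 :=
  funext fun x ↦ sub_eq_zero.mpr (hc x)

lemma fwdDiff_iter_smul_of_periodic {R : Type*} [Ring R] [Module R G] (f : M → R) {c : M → G}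
    (hc : Periodic c h) (n : ℕ) : Δ_[h] ^[n] (f • c) = Δ_[h] ^[n] f • c := by
  induction n generalizing f with
  | zero => rfl
  | succ n ih =>
    have fwdDiff_smul_periodic : Δ_[h] (f • c) = Δ_[h] f • c := by
      rw [fwdDiff_smul, fwdDiff_eq_zero_of_periodic hc, smul_zero, smul_zero, add_zero, add_zero]
    rw [iterate_succ_apply, fwdDiff_smul_periodic, ih, iterate_succ_apply]

end ForwardDifference

section AddMonoidHomPow

variable {M R : Type*} [AddCommMonoid M] [CommRing R] (ψ : M →+ R) (h : M)

lemma fwdDiff_addMonoidHom_pow (n : ℕ) :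
    Δ_[h] (⇑ψ ^ n) = ∑ i ∈ range n, (ψ h ^ (n - i) * n.choose i) • ⇑ψ ^ i := by
  ext x
  simp [fwdDiff, add_pow, sum_range_succ, mul_comm, mul_assoc]

lemma fwdDiff_iter_addMonoidHom_pow_eq_zero_of_lt {i n : ℕ} (hin : i < n) :
    Δ_[h] ^[n] (⇑ψ ^ i) = 0 := by
  induction n generalizing i with
  | zero => exact absurd hin i.not_lt_zero
  | succ n ih =>
    rw [iterate_succ_apply, fwdDiff_addMonoidHom_pow, fwdDiff_iter_finsetSum]
    refine sum_eq_zero fun j hj ↦ ?_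
    have hjn : j < n := (mem_range.mp hj).trans_le (Nat.le_of_lt_succ hin)
    rw [fwdDiff_iter_const_smul, ih hjn, smul_zero]

lemma fwdDiff_iter_addMonoidHom_pow_eq_factorial_mul (n : ℕ) :
    Δ_[h] ^[n] (⇑ψ ^ n) = fun _ ↦ n ! * ψ h ^ n := by
  induction n with
  | zero => ext; simp
  | succ n ih =>
    have lower_terms : ∀ i ∈ range n,
        Δ_[h] ^[n] ((ψ h ^ (n + 1 - i) * (n + 1).choose i) • ⇑ψ ^ i) = 0 := fun i hi ↦ by
      rw [fwdDiff_iter_const_smul,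
        fwdDiff_iter_addMonoidHom_pow_eq_zero_of_lt ψ h (mem_range.mp hi), smul_zero]
    rw [iterate_succ_apply, fwdDiff_addMonoidHom_pow, fwdDiff_iter_finsetSum, sum_range_succ,
      sum_eq_zero lower_terms, zero_add, fwdDiff_iter_const_smul, ih]
    ext
    calc ψ h ^ (n + 1 - n) * (n + 1).choose n * (n ! * ψ h ^ n)
        = ((n + 1) * n !) * ψ h ^ (n + 1) := by
          rw [Nat.add_sub_cancel_left, Nat.choose_succ_self_right]; push_cast; ring
      _ = (n + 1)! * ψ h ^ (n + 1) := by rw [Nat.factorial_succ]; push_cast; rfl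

end AddMonoidHomPow

section QuasiPolynomial

variable {M R G : Type*} [AddCommMonoid M] [CommRing R] [AddCommGroup G] [Module R G]

/-- The function `x ↦ ∑ i ≤ d, ψ x ^ i • c i x`. When every coefficient `c i` is periodic with
period `h`, it is a quasi-polynomial of degree at most `d` and period `h` in the variable `ψ x`;
quasi-polynomials on `ℕ` are the case where `ψ` is the cast `ℕ → R`. Periodicity is not part of
the definition. -/
def quasiPolynomial (ψ : M →+ R) {d : ℕ} (c : Fin (d + 1) → M → G) : M → G :=
  ∑ i : Fin (d + 1), (⇑ψ ^ (i : ℕ)) • c i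

lemma quasiPolynomial_quadratic_apply (ψ : M →+ R) (c₀ c₁ c₂ : M → G) (x : M) :
    quasiPolynomial ψ ![c₀, c₁, c₂] x = c₀ x + ψ x • c₁ x + ψ x ^ 2 • c₂ x := by
  simp [quasiPolynomial, Fin.sum_univ_three]

lemma fwdDiff_iter_quasiPolynomial (ψ : M →+ R) {h : M} {d : ℕ} {c : Fin (d + 1) → M → G}
    (hc : ∀ i, Periodic (c i) h) (x : M) :
    Δ_[h] ^[d] (quasiPolynomial ψ c) x = (d ! * ψ h ^ d) • c (Fin.last d) x := by
  have lower_terms (i : Fin d) : Δ_[h] ^[d] (⇑ψ ^ (i : ℕ)) = 0 :=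
    fwdDiff_iter_addMonoidHom_pow_eq_zero_of_lt ψ h i.isLt
  simp [quasiPolynomial, fwdDiff_iter_smul_of_periodic _ (hc _), Fin.sum_univ_castSucc,
    lower_terms, fwdDiff_iter_addMonoidHom_pow_eq_factorial_mul]

theorem slope_mul_period_sq_integral_general (ψ : M →+ R) {h : M} {d : ℕ}
    {c : Fin (d + 1) → M → G} (hc : ∀ i, Periodic (c i) h) {S : AddSubgroup G}
    (hS : ∀ x, quasiPolynomial ψ c x ∈ S) (x : M) :
    (d ! * ψ h ^ d) • c (Fin.last d) x ∈ S :=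
  fwdDiff_iter_quasiPolynomial ψ hc x ▸ fwdDiff_iter_mem hS d x

end QuasiPolynomial

/-- If `a : ℕ → ℤ` is an integer-valued quadratic quasi-polynomial with
period `π`, then for every slope `s = 2·c₂(n)` one has `s·π² ∈ ℤ`. -/
theorem slope_mul_period_sq_integral
    (a : ℕ → ℤ) (π : ℕ) (hπ : 0 < π)
    (c₂ c₁ c₀ : ℕ → ℚ)
    (h₂ : ∀ n, c₂ (n + π) = c₂ n) (h₁ : ∀ n, c₁ (n + π) = c₁ n)
    (h₀ : ∀ n, c₀ (n + π) = c₀ n)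
    (ha : ∀ n : ℕ, (a n : ℚ) = c₂ n * (n : ℚ) ^ 2 + c₁ n * (n : ℚ) + c₀ n) :
    ∀ n : ℕ, ∃ k : ℤ, (2 * c₂ n) * (π : ℚ) ^ 2 = (k : ℚ) := by
  intro n
  have periodic : ∀ i, Periodic (![c₀, c₁, c₂] i) π := by
    simpa [Fin.forall_fin_succ] using ⟨h₀, h₁, h₂⟩
  have integral (m : ℕ) : quasiPolynomial (Nat.castAddMonoidHom ℚ) ![c₀, c₁, c₂] m ∈
      (Int.castAddHom ℚ).range :=
    ⟨a m, (ha m).trans <| by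
      simp only [quasiPolynomial_quadratic_apply, Nat.coe_castAddMonoidHom, smul_eq_mul]; ring⟩
  obtain ⟨k, hk : (k : ℚ) = (2 ! * (π : ℚ) ^ 2) • c₂ n⟩ :=
    slope_mul_period_sq_integral_general _ periodic integral n
  exact ⟨k, by rw [hk, Nat.factorial_two, smul_eq_mul]; push_cast; ring⟩
end

section
/- Let m be a positive integer, π a positive integer, and a : ℕ → ℚ a sequence such that, in ℚ[[z]], the product (1 − z^π)^m · ∑_{n≥0} a(n) z^n equals (the power series of) a polynomial P(z) with deg P < π·m. Then a is a quasi-polynomial of degree at most m−1 and period π: there exist functions c₀, …, c_{m−1} : ℕ → ℚ, each periodic with period π, such that a(n) = ∑_{j=0}^{m−1} c_j(n)·n^j for all n ∈ ℕ. -/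
open PowerSeries

/-!
Multiplying a generating series by `1 - X ^ π` takes the forward difference with step `π` of its
coefficients (shifted by `π`), so the hypothesis says that the `m`-th such difference of `a`
vanishes. Newton's formula along the progression `r, r + π, r + 2π, …` then stops after `m` terms:
`a (r + k * π)` is a combination of the binomial coefficients `k.choose i` with `i < m`. Since
`k = (n - r) / π` at `n = r + k * π`, these are polynomials of degree less than `m` in `n`, whose
coefficients only depend on the residue `r` of `n`.
-/

lemma coeff_add_mul_one_sub_X_pow_pow_mul {R : Type*} [Ring R] (d m n : ℕ) (F : R⟦X⟧) :
    coeff (n + d * m) ((1 - (X : R⟦X⟧) ^ d) ^ m * F) =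
      (fwdDiff d)^[m] (fun k ↦ coeff k F) n := by
  induction m generalizing n with
  | zero => simp
  | succ m ih =>
    rw [Function.iterate_succ_apply', fwdDiff, ← ih, ← ih, pow_succ', mul_assoc, sub_mul, one_mul,
      map_sub, add_right_comm n d, mul_add_one, ← add_assoc, coeff_X_pow_mul]

lemma eq_sum_range_choose_smul_of_fwdDiff_iter_eq_zero {M G : Type*} [AddCommMonoid M]
    [AddCommGroup G] {h : M} {f : M → G} {m : ℕ} (hf : (fwdDiff h)^[m] f = 0) (k : ℕ) (x : M) :
    f (x + k • h) = ∑ i ∈ Finset.range m, k.choose i • (fwdDiff h)^[i] f x := by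
  have hvanish (i : ℕ) (hi : m ≤ i) : (fwdDiff h)^[i] f = 0 := by
    obtain ⟨j, rfl⟩ := Nat.exists_eq_add_of_le' hi
    rw [Function.iterate_add_apply, hf]
    exact Function.iterate_fixed (fwdDiff_const h 0) j
  rw [shift_eq_sum_fwdDiff_iter h f k x]
  refine Finset.sum_congr_of_eq_on_inter (fun i _ hi ↦ ?_) (fun i _ hi ↦ ?_) fun _ _ _ ↦ rfl
  · rw [hvanish i (by simpa using hi), Pi.zero_apply, smul_zero]
  · rw [Nat.choose_eq_zero_of_lt (by simpa using hi), zero_smul]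

section chooseProgression

variable (K : Type*) [Field K]

/-- The binomial coefficient `((X - r) / d).choose i` as a polynomial in `X`: it recovers
`k.choose i` from the `k`-th term `r + k * d` of an arithmetic progression. -/
noncomputable def chooseProgression (d r i : ℕ) : Polynomial K :=
  Polynomial.C (i.factorial : K)⁻¹ *
    (descPochhammer K i).comp (Polynomial.C (d : K)⁻¹ * (Polynomial.X - Polynomial.C (r : K)))

lemma natDegree_chooseProgression_le (d r i : ℕ) : (chooseProgression K d r i).natDegree ≤ i := by
  have hlin : (Polynomial.C (d : K)⁻¹ * (Polynomial.X - Polynomial.C (r : K))).natDegree ≤ 1 :=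
    (Polynomial.natDegree_C_mul_le _ _).trans (Polynomial.natDegree_X_sub_C _).le
  calc (chooseProgression K d r i).natDegree
      ≤ (descPochhammer K i).natDegree * _ :=
        (Polynomial.natDegree_C_mul_le _ _).trans Polynomial.natDegree_comp_le
    _ ≤ i * 1 := Nat.mul_le_mul (descPochhammer_natDegree K i).le hlin
    _ = i := mul_one i

lemma eval_chooseProgression_mod [CharZero K] (d n i : ℕ) :
    (chooseProgression K d (n % d) i).eval (n : K) = (n / d).choose i := by
  -- At `d = 0` this still holds: both divisions return `0`.
  have hquot : (d : K)⁻¹ * (n - (n % d : ℕ)) = (n / d : ℕ) := by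
    rw [← Nat.cast_sub (Nat.mod_le n d), Nat.div_eq_sub_mod_div,
      Nat.cast_div_charZero (Nat.dvd_sub_mod n), inv_mul_eq_div]
  simp only [chooseProgression, Polynomial.eval_mul, Polynomial.eval_C, Polynomial.eval_comp,
    Polynomial.eval_sub, Polynomial.eval_X, hquot]
  rw [Nat.cast_choose_eq_descPochhammer_div, inv_mul_eq_div]

end chooseProgression

theorem exists_periodic_coeff_of_fwdDiff_iter_eq_zero {M : Type*} [AddCommGroup M]
    [Module ℚ M] {m d : ℕ} {a : ℕ → M} (ha : (fwdDiff d)^[m] a = 0) :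
    ∃ c : Fin m → ℕ → M, (∀ j, Function.Periodic (c j) d) ∧
      ∀ n, a n = ∑ j : Fin m, n ^ (j : ℕ) • c j n := by
  let p (n i : ℕ) : Polynomial ℚ := chooseProgression ℚ d (n % d) i
  let D (n i : ℕ) : M := (fwdDiff d)^[i] a (n % d)
  refine ⟨fun j n ↦ ∑ i ∈ Finset.range m, (p n i).coeff j • D n i, fun j n ↦ ?_, fun n ↦ ?_⟩
  · simp only [p, D, Nat.add_mod_right]
  have heval (i : ℕ) (hi : i ∈ Finset.range m) :
      ((n / d).choose i : ℚ) = ∑ j : Fin m, (n : ℚ) ^ (j : ℕ) * (p n i).coeff j := by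
    rw [← eval_chooseProgression_mod, Polynomial.eval_eq_sum_range'
      ((natDegree_chooseProgression_le ℚ d (n % d) i).trans_lt (Finset.mem_range.1 hi)),
      ← Fin.sum_univ_eq_sum_range]
    exact Finset.sum_congr rfl fun j _ ↦ mul_comm _ _
  calc a n = a (n % d + (n / d) • d) := by rw [smul_eq_mul, Nat.mod_add_div']
    _ = ∑ i ∈ Finset.range m, (n / d).choose i • D n i :=
        eq_sum_range_choose_smul_of_fwdDiff_iter_eq_zero ha _ _
    _ = ∑ i ∈ Finset.range m, ∑ j : Fin m, n ^ (j : ℕ) • (p n i).coeff j • D n i := by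
        refine Finset.sum_congr rfl fun i hi ↦ ?_
        rw [← Nat.cast_smul_eq_nsmul ℚ, heval i hi, Finset.sum_smul]
        simp only [mul_smul, ← Nat.cast_pow, Nat.cast_smul_eq_nsmul]
    _ = ∑ j : Fin m, n ^ (j : ℕ) • ∑ i ∈ Finset.range m, (p n i).coeff j • D n i := by
        rw [Finset.sum_comm]
        simp only [Finset.smul_sum]

theorem quasiPolynomial_of_generating_series_general {R : Type*} [Ring R] [Algebra ℚ R]
    (m π : ℕ) (a : ℕ → R) (P : Polynomial R) (hdeg : P.degree < (π * m : ℕ))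
    (heq : (1 - (X : R⟦X⟧) ^ π) ^ m * mk a = (P : R⟦X⟧)) :
    ∃ c : Fin m → ℕ → R, (∀ j, Function.Periodic (c j) π) ∧
      ∀ n, a n = ∑ j : Fin m, c j n * (n : R) ^ (j : ℕ) := by
  have hdiff : (fwdDiff π)^[m] a = 0 := by
    funext n
    have hcoeff : coeff (n + π * m) (P : R⟦X⟧) = 0 := by
      rw [Polynomial.coeff_coe]
      exact Polynomial.coeff_eq_zero_of_degree_lt
        (hdeg.trans_le (Nat.cast_le.2 (Nat.le_add_left _ _)))
    rwa [← heq, coeff_add_mul_one_sub_X_pow_pow_mul, funext (coeff_mk · a)] at hcoeff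
  obtain ⟨c, hperiodic, hsum⟩ := exists_periodic_coeff_of_fwdDiff_iter_eq_zero hdiff
  refine ⟨c, hperiodic, fun n ↦ (hsum n).trans (Finset.sum_congr rfl fun j _ ↦ ?_)⟩
  rw [nsmul_eq_mul', Nat.cast_pow]

/-- If `(1 − z^π)^m · ∑_{n≥0} a(n) zⁿ` is a polynomial of degree less
than `π·m`, then `a` is a quasi-polynomial of degree at most `m−1` and period `π`. -/
theorem quasiPolynomial_of_generating_series
    (m : ℕ) (hm : 0 < m) (π : ℕ) (hπ : 0 < π) (a : ℕ → ℚ)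
    (P : Polynomial ℚ) (hdeg : P.degree < (π * m : ℕ))
    (heq : (1 - (PowerSeries.X : PowerSeries ℚ) ^ π) ^ m * PowerSeries.mk a
      = (P : PowerSeries ℚ)) :
    ∃ c : Fin m → ℕ → ℚ,
      (∀ j : Fin m, ∀ n : ℕ, c j (n + π) = c j n) ∧
      ∀ n : ℕ, a n = ∑ j : Fin m, c j n * (n : ℚ) ^ (j : ℕ) :=
  quasiPolynomial_of_generating_series_general m π a P hdeg heq
end
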